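/- Let R be a Noetherian local ring of Krull dimension d containing a field, and let x_1,…,x_d be a system of parameters of R. Then 𝔥^d_x(R^n) = n for every integer n ≥ 1. -/

import Mathlib

open scoped BigOperators ENNReal

universe u v

/-- A filtration of `M` of length `h` whose factors are cyclic modules killed by `J`. -/
def HasQLFiltration (S : Type u) [CommRing S] (J : Ideal S)
    (M : Type v) [AddCommGroup M] [Module S M] (h : ℕ) : Prop :=
  ∃ c : Fin (h + 1) → Submodule S M,
    Monotone c ∧ c 0 = ⊥ ∧ c (Fin.last h) = ⊤ ∧
    ∀ i : Fin h,
      (∃ m : M, c i.succ = c i.castSucc ⊔ Submodule.span S {m}) ∧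
      ∀ a ∈ J, ∀ x ∈ c i.succ, a • x ∈ c i.castSucc

/-- The `J`-quasilength of `M`. -/
noncomputable def quasilength (S : Type u) [CommRing S] (J : Ideal S)
    (M : Type v) [AddCommGroup M] [Module S M] : ℕ∞ :=
  sInf {n : ℕ∞ | ∃ h : ℕ, n = (h : ℕ∞) ∧ HasQLFiltration S J M h}

/-- The ideal `(x₁^{t₁}, …, x_d^{t_d})`. -/
def powerIdeal {R : Type u} [CommRing R] {d : ℕ} (x : Fin d → R) (t : Fin d → ℕ) : Ideal R :=
  Ideal.span (Set.range fun i => x i ^ t i)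

/-- The content `𝔥^d_x(M)` of `M` with respect to `x₁, …, x_d`. -/
noncomputable def content {R : Type u} [CommRing R] {d : ℕ} (x : Fin d → R)
    (M : Type v) [AddCommGroup M] [Module R M] : ℝ≥0∞ :=
  ⨆ s : ℕ, ⨅ t : {t : Fin d → ℕ // ∀ i, s ≤ t i ∧ 0 < t i},
    (quasilength R (Ideal.span (Set.range x))
        (M ⧸ (powerIdeal x (t : Fin d → ℕ) • (⊤ : Submodule R M))) : ℝ≥0∞) /
      ∏ i, ((t : Fin d → ℕ) i : ℝ≥0∞)

/-!
Filtering `R^n / I_t R^n` by monomials in the `xᵢ` shows that its quasilength is at most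
`n * t₁ ⋯ t_d`, so everything lies in the reverse inequality. A filtration amounts to finitely many
elements of `R` satisfying finitely many equations, hence it can be mapped along ring homomorphisms
and descends to finitely generated subrings.

In characteristic `p`, the `q`-th powers of the elements describing a filtration of length `h` of
`R^n / I_t R^n` describe one of `R^n / I_{qt} R^n` with factors killed by `(x_i^q)`, so
`n * ℓ(R / I_{qt}) ≤ h * ℓ(R / I_q)`. As `ℓ(R / I_q)` grows like a positive multiple of `q^d`,
comparing both sides for `q → ∞` gives `n * t₁ ⋯ t_d ≤ h`.

In characteristic zero, the completion of `R` is finite over a subring `K⟦X₁, …, X_d⟧` in which the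
`xᵢ` are the variables. A filtration there comes from a finite algebra `T` over a finitely
generated subring `S ⊆ K⟦X₁, …, X_d⟧`, together with an `S`-linear form on `T` not killing `1`. It
suffices to map `S` to a power series ring over a field of positive characteristic without killing
the value of the form at `1`: base change along such a map then gives a ring, finite over those
power series and of dimension `d`, to which the first case applies. Such maps are found by
induction on `d`. By Weierstrass preparation in the first variable, the inclusion of `S` can be
approximated modulo a power of a monic polynomial with coefficients in `K⟦X₂, …, X_d⟧`. The
approximation involves only finitely many coefficients, so it can be reduced to positive
characteristic by induction, and there Newton's method lifts it to an actual homomorphism.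
-/

section Filtration

variable {S : Type u} [CommRing S] {M : Type v} [AddCommGroup M] [Module S M]

theorem setOf_castSucc_lt_succ {h : ℕ} (i : Fin h) :
    {k : Fin h | k.castSucc < i.succ} = insert i {k | k.castSucc < i.castSucc} := by
  ext k
  simp [Fin.castSucc_lt_succ_iff, le_iff_eq_or_lt]

theorem span_image_castSucc_lt_succ {h : ℕ} (m : Fin h → M) (i : Fin h) :
    Submodule.span S (m '' {k | k.castSucc < i.succ}) =
      Submodule.span S (m '' {k | k.castSucc < i.castSucc}) ⊔ Submodule.span S {m i} := by
  rw [setOf_castSucc_lt_succ, Set.image_insert_eq, Submodule.span_insert, sup_comm]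

theorem hasQLFiltration_iff {J : Ideal S} {h : ℕ} :
    HasQLFiltration S J M h ↔ ∃ m : Fin h → M, Submodule.span S (Set.range m) = ⊤ ∧
      ∀ i, ∀ a ∈ J, a • m i ∈ Submodule.span S (m '' Set.Iio i) := by
  constructor
  · rintro ⟨c, -, hbot, htop, hc⟩
    choose m hm using fun i => (hc i).1
    have hspan : ∀ i, c i = Submodule.span S (m '' {k | k.castSucc < i}) := by
      intro i
      induction i using Fin.induction with
      | zero => simp [hbot]
      | succ i ih => rw [hm, ih, span_image_castSucc_lt_succ]
    refine ⟨m, ?_, fun i a ha => ?_⟩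
    · rw [← htop, hspan, ← Set.image_univ]
      simp [Fin.castSucc_lt_last]
    · have hmem := (hc i).2 a ha (m i) (hm i ▸
        Submodule.mem_sup_right (Submodule.mem_span_singleton_self _))
      rw [hspan] at hmem
      exact hmem
  · rintro ⟨m, htop, hJ⟩
    refine ⟨fun i => Submodule.span S (m '' {k | k.castSucc < i}), fun i j hij =>
      Submodule.span_mono (Set.image_mono fun k hk => lt_of_lt_of_le hk hij), by simp,
      by simp [Fin.castSucc_lt_last, htop], fun i => ⟨⟨m i, span_image_castSucc_lt_succ m i⟩, ?_⟩⟩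
    intro a ha y hy
    let N := Submodule.span S (m '' {k | k.castSucc < i.castSucc})
    suffices hle : m '' {k | k.castSucc < i.succ} ⊆ N.comap (LinearMap.lsmul S M a) from
      Submodule.span_le.2 hle hy
    rintro _ ⟨k, hk, rfl⟩
    refine Submodule.span_mono (Set.image_mono fun l hl => ?_) (hJ k a ha)
    exact (Fin.castSucc_lt_castSucc_iff.2 hl).trans_le (Fin.le_castSucc_iff.2 hk)

theorem hasQLFiltration_span_iff {s : Set S} {h : ℕ} :
    HasQLFiltration S (Ideal.span s) M h ↔
      ∃ m : Fin h → M, Submodule.span S (Set.range m) = ⊤ ∧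
        ∀ i, ∀ a ∈ s, a • m i ∈ Submodule.span S (m '' Set.Iio i) := by
  rw [hasQLFiltration_iff]
  refine exists_congr fun m => and_congr_right fun _ => forall_congr' fun i => ?_
  simp only [← Submodule.mem_colon_singleton]
  exact Ideal.span_le

theorem hasQLFiltration_of_rank {s : Set S} {ι : Type*} [Fintype ι] (w : ι → M) (ρ : ι → ℕ)
    (hw : Submodule.span S (Set.range w) = ⊤)
    (hρ : ∀ i, ∀ a ∈ s, a • w i ∈ Submodule.span S (w '' {k | ρ k < ρ i})) :
    HasQLFiltration S (Ideal.span s) M (Fintype.card ι) := by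
  let e₀ : Fin (Fintype.card ι) ≃ ι := (Fintype.equivFin ι).symm
  let e : Fin (Fintype.card ι) ≃ ι := (Tuple.sort (ρ ∘ e₀)).trans e₀
  have he : Monotone (ρ ∘ e) := Tuple.monotone_sort (ρ ∘ e₀)
  refine hasQLFiltration_span_iff.2 ⟨w ∘ e, by rw [EquivLike.range_comp, hw], fun i a ha => ?_⟩
  refine Submodule.span_mono ?_ (hρ (e i) a ha)
  rintro _ ⟨k, hk, rfl⟩
  refine ⟨e.symm k, he.reflect_lt ?_, by simp⟩
  simpa using hk

theorem length_sup_span_singleton_le {J : Ideal S} {N : Submodule S M} {m : M}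
    (hJ : ∀ a ∈ J, a • m ∈ N) :
    Module.length S (N ⊔ Submodule.span S {m} : Submodule S M) ≤
      Module.length S N + Module.length S (S ⧸ J) := by
  set N' := N ⊔ Submodule.span S {m}
  have hle : N ≤ N' := le_sup_left
  have hm : m ∈ N' := Submodule.mem_sup_right (Submodule.mem_span_singleton_self m)
  let π := (N.submoduleOf N').mkQ
  let f : S ⧸ J →ₗ[S] N' ⧸ N.submoduleOf N' :=
    J.liftQ (π ∘ₗ LinearMap.toSpanSingleton S N' ⟨m, hm⟩) fun a ha => by
      rw [LinearMap.mem_ker, LinearMap.comp_apply, Submodule.mkQ_apply,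
        Submodule.Quotient.mk_eq_zero]
      exact hJ a ha
  have hf : Function.Surjective f := fun y => by
    obtain ⟨⟨y, hy⟩, rfl⟩ := Submodule.mkQ_surjective _ y
    obtain ⟨a, ha, b, hb, rfl⟩ := Submodule.mem_sup.1 hy
    obtain ⟨r, rfl⟩ := Submodule.mem_span_singleton.1 hb
    refine ⟨Submodule.Quotient.mk r, (Submodule.Quotient.eq _).2 ?_⟩
    simpa [Submodule.submoduleOf] using ha
  calc Module.length S N' = Module.length S N + Module.length S (N' ⧸ N.submoduleOf N') :=
        Module.length_eq_add_of_exact (Submodule.inclusion hle) π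
          (Submodule.inclusion_injective hle) (Submodule.mkQ_surjective _)
          (LinearMap.exact_iff.2
            ((Submodule.ker_mkQ _).trans (Submodule.range_inclusion _ _ hle).symm))
    _ ≤ Module.length S N + Module.length S (S ⧸ J) := by
        gcongr
        exact Module.length_le_of_surjective f hf

theorem HasQLFiltration.length_le {J : Ideal S} {h : ℕ} (H : HasQLFiltration S J M h) :
    Module.length S M ≤ h * Module.length S (S ⧸ J) := by
  obtain ⟨c, -, hbot, htop, hc⟩ := H
  suffices hi : ∀ i, Module.length S (c i) ≤ (i : ℕ) * Module.length S (S ⧸ J) by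
    rw [← Module.length_top, ← htop]
    exact hi (Fin.last h)
  intro i
  induction i using Fin.induction with
  | zero => rw [hbot, Module.length_bot]; exact zero_le
  | succ i ih =>
    obtain ⟨⟨m, hm⟩, hJ⟩ := hc i
    have hmem : m ∈ c i.succ :=
      hm ▸ Submodule.mem_sup_right (Submodule.mem_span_singleton_self m)
    rw [hm]
    refine (length_sup_span_singleton_le fun a ha => hJ a ha m hmem).trans ?_
    rw [Fin.val_succ, Nat.cast_succ, add_mul, one_mul]
    gcongr
    exact ih

end Filtration

section PowerIdeal

variable {R : Type u} [CommRing R] {d : ℕ}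

theorem pow_mem_powerIdeal (x : Fin d → R) (t : Fin d → ℕ) (i : Fin d) :
    x i ^ t i ∈ powerIdeal x t :=
  Ideal.subset_span ⟨i, rfl⟩

theorem powerIdeal_anti (x : Fin d → R) {s t : Fin d → ℕ} (h : s ≤ t) :
    powerIdeal x t ≤ powerIdeal x s := by
  refine Ideal.span_le.2 (Set.range_subset_iff.2 fun i => ?_)
  exact Ideal.mem_of_dvd _ (pow_dvd_pow _ (h i)) (pow_mem_powerIdeal x s i)

theorem powerIdeal_pow (x : Fin d → R) (s t : Fin d → ℕ) :
    powerIdeal (fun i => x i ^ s i) t = powerIdeal x (s * t) := by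
  simp only [powerIdeal, Pi.mul_apply, pow_mul]

theorem map_powerIdeal {R' : Type*} [CommRing R'] (φ : R →+* R') (x : Fin d → R)
    (t : Fin d → ℕ) : (powerIdeal x t).map φ = powerIdeal (φ ∘ x) t := by
  simp only [powerIdeal, Ideal.map_span, ← Set.range_comp, Function.comp_def, map_pow]

theorem mem_smul_top_pi {ι : Type*} [Finite ι] (I : Ideal R) (w : ι → R) :
    w ∈ I • (⊤ : Submodule R (ι → R)) ↔ ∀ r, w r ∈ I := by
  classical
  have := Fintype.ofFinite ι
  refine ⟨fun hw r => ?_, fun hw => ?_⟩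
  · exact Submodule.smul_induction_on hw (fun a ha y _ => I.mul_mem_right _ ha)
      fun y z hy hz => I.add_mem hy hz
  · rw [pi_eq_sum_univ w]
    exact Submodule.sum_mem _ fun r _ => Submodule.smul_mem_smul (hw r) trivial

theorem length_pi_quotient_le (I : Ideal R) (n : ℕ) :
    n * Module.length R (R ⧸ I) ≤
      Module.length R ((Fin n → R) ⧸ I • (⊤ : Submodule R (Fin n → R))) := by
  let f : (Fin n → R) →ₗ[R] (Fin n → R ⧸ I) := LinearMap.pi fun r => I.mkQ ∘ₗ LinearMap.proj r
  have hf : I • ⊤ ≤ LinearMap.ker f := fun w hw => by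
    rw [LinearMap.mem_ker]
    ext r
    exact (Submodule.Quotient.mk_eq_zero I).2 ((mem_smul_top_pi I w).1 hw r)
  have hsurj : Function.Surjective ((I • ⊤ : Submodule R (Fin n → R)).liftQ f hf) := fun y => by
    choose w hw using fun r => I.mkQ_surjective (y r)
    exact ⟨Submodule.Quotient.mk w, funext hw⟩
  have h := Module.length_le_of_surjective _ hsurj
  rwa [Module.length_pi, ENat.card_eq_coe_fintype_card, Fintype.card_fin] at h

theorem mul_prod_pow (x : Fin d → R) (e : Fin d → ℕ) (j : Fin d) :
    x j * ∏ i, x i ^ e i = ∏ i, x i ^ (e + Pi.single j 1 : Fin d → ℕ) i := by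
  have hj : ∏ i, x i ^ (Pi.single j 1 : Fin d → ℕ) i = x j := by simp [Pi.single_apply]
  simp only [Pi.add_apply, pow_add, Finset.prod_mul_distrib, hj, mul_comm]

theorem prod_pow_mem_powerIdeal (x : Fin d → R) {t e : Fin d → ℕ} {j : Fin d} (hj : t j ≤ e j) :
    ∏ i, x i ^ e i ∈ powerIdeal x t :=
  Ideal.mem_of_dvd _ ((pow_dvd_pow _ hj).trans
    (Finset.dvd_prod_of_mem (fun i => x i ^ e i) (Finset.mem_univ j))) (pow_mem_powerIdeal x t j)

theorem coe_update_add_one {t : Fin d → ℕ} (e : ∀ i, Fin (t i)) {j : Fin d}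
    (hj : (e j : ℕ) + 1 < t j) :
    (fun i => (Function.update e j ⟨e j + 1, hj⟩ i : ℕ)) =
      (fun i => (e i : ℕ)) + Pi.single j 1 := by
  ext i
  obtain rfl | hij := eq_or_ne i j <;> simp [*]

theorem sum_sub_update_lt {t : Fin d → ℕ} (e : ∀ i, Fin (t i)) {j : Fin d}
    (hj : (e j : ℕ) + 1 < t j) :
    ∑ i, (t i - Function.update e j ⟨e j + 1, hj⟩ i) < ∑ i, (t i - e i) := by
  have hup := congrFun (coe_update_add_one e hj)
  refine Finset.sum_lt_sum (fun i _ => ?_) ⟨j, Finset.mem_univ j, ?_⟩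
  · exact Nat.sub_le_sub_left ((Nat.le_add_right _ _).trans_eq (hup i).symm) _
  · simp only [Function.update_self]
    omega

theorem hasQLFiltration_pi_quotient_powerIdeal (x : Fin d → R) (t : Fin d → ℕ) (n : ℕ) :
    HasQLFiltration R (Ideal.span (Set.range x))
      ((Fin n → R) ⧸ (powerIdeal x t • (⊤ : Submodule R (Fin n → R)))) (n * ∏ i, t i) := by
  classical
  set W := powerIdeal x t • (⊤ : Submodule R (Fin n → R))
  let mon (r : Fin n) (e : Fin d → ℕ) : (Fin n → R) ⧸ W := W.mkQ (Pi.single r (∏ i, x i ^ e i))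
  have mon_eq_zero {r e j} (hj : t j ≤ e j) : mon r e = 0 := by
    refine (Submodule.Quotient.mk_eq_zero W).2 ((mem_smul_top_pi _ _).2 fun r' => ?_)
    rw [Pi.single_apply]
    split_ifs
    exacts [prod_pow_mem_powerIdeal x hj, zero_mem _]
  have smul_mon (r e j) : x j • mon r e = mon r (e + Pi.single j 1) := by
    rw [← map_smul, ← Pi.single_smul, smul_eq_mul, mul_prod_pow]
  let w : Fin n × (∀ i, Fin (t i)) → (Fin n → R) ⧸ W := fun p => mon p.1 fun i => p.2 i
  have hgen (r : Fin n) : mon r 0 ∈ Submodule.span R (Set.range w) := by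
    by_cases ht : ∀ j, 0 < t j
    · exact Submodule.subset_span ⟨⟨r, fun j => ⟨0, ht j⟩⟩, rfl⟩
    · obtain ⟨j, hj⟩ := not_forall.1 ht
      rw [mon_eq_zero (j := j) (by simpa using hj)]
      exact zero_mem _
  have hcard : n * ∏ i, t i = Fintype.card (Fin n × (∀ i, Fin (t i))) := by
    simp [Fintype.card_prod, Fintype.card_pi]
  rw [hcard]
  refine hasQLFiltration_of_rank w (fun p => ∑ i, (t i - p.2 i)) (eq_top_iff.2 fun y _ => ?_) ?_
  · obtain ⟨y, rfl⟩ := W.mkQ_surjective y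
    rw [pi_eq_sum_univ' y, map_sum]
    refine Submodule.sum_mem _ fun r _ => ?_
    rw [map_smul]
    exact Submodule.smul_mem _ _ (by simpa [mon] using hgen r)
  · rintro ⟨r, e⟩ _ ⟨j, rfl⟩
    rw [smul_mon]
    by_cases hj : (e j : ℕ) + 1 < t j
    · exact Submodule.subset_span ⟨⟨r, Function.update e j ⟨e j + 1, hj⟩⟩,
        sum_sub_update_lt e hj, congrArg (mon r) (coe_update_add_one e hj)⟩
    · rw [mon_eq_zero (j := j) (by simpa using hj)]
      exact zero_mem _

end PowerIdeal

section PowerFiltration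

theorem mem_span_image_iff_exists_coeff {S M ι : Type*} [CommRing S] [AddCommGroup M] [Module S M]
    [Fintype ι] {m : ι → M} {s : Set ι} {y : M} :
    y ∈ Submodule.span S (m '' s) ↔ ∃ a : ι → S, (∀ k ∉ s, a k = 0) ∧ ∑ k, a k • m k = y := by
  simp only [Finsupp.mem_span_image_iff_linearCombination, Finsupp.mem_supported']
  refine (Finsupp.equivFunOnFinite (α := ι) (M := S)).exists_congr fun a => ?_
  rw [Finsupp.linearCombination_apply, Finsupp.sum_fintype _ _ (by simp)]
  rfl

theorem mkQ_mem_span_image_iff_exists_coeff {S M ι : Type*} [CommRing S] [AddCommGroup M]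
    [Module S M] [Fintype ι] {W : Submodule S M} {m : ι → M} {s : Set ι} {y : M} :
    W.mkQ y ∈ Submodule.span S (W.mkQ ∘ m '' s) ↔
      ∃ a : ι → S, (∀ k ∉ s, a k = 0) ∧ y - ∑ k, a k • m k ∈ W := by
  rw [mem_span_image_iff_exists_coeff]
  refine exists_congr fun a => and_congr_right fun _ => ?_
  rw [← Submodule.Quotient.eq, ← Submodule.mkQ_apply, ← Submodule.mkQ_apply, map_sum, eq_comm]
  simp only [map_smul, Function.comp_apply]

/-- The module `R^n / (x₁^{t₁}, …, x_d^{t_d}) R^n` has a filtration of length `h` as in the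
definition of its `(x₁, …, x_d)`-quasilength. -/
def HasPowerFiltration {R : Type u} [CommRing R] {d : ℕ} (x : Fin d → R) (t : Fin d → ℕ)
    (n h : ℕ) : Prop :=
  HasQLFiltration R (Ideal.span (Set.range x))
    ((Fin n → R) ⧸ (powerIdeal x t • (⊤ : Submodule R (Fin n → R)))) h

variable {R : Type u} [CommRing R] {d : ℕ} {x : Fin d → R} {t : Fin d → ℕ} {n h : ℕ}

theorem hasPowerFiltration_iff_exists_coeff :
    HasPowerFiltration x t n h ↔
      ∃ (U : Fin h → Fin n → R) (A : Fin d → Fin h → Fin h → R) (B : Fin n → Fin h → R),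
        (∀ j i k, i ≤ k → A j i k = 0) ∧
        (∀ j i r, (x j • U i - ∑ k, A j i k • U k) r ∈ powerIdeal x t) ∧
        ∀ i r, (Pi.single i 1 - ∑ k, B i k • U k : Fin n → R) r ∈ powerIdeal x t := by
  set W := powerIdeal x t • (⊤ : Submodule R (Fin n → R)) with hW
  rw [HasPowerFiltration, hasQLFiltration_span_iff, W.mkQ_surjective.comp_left.exists]
  refine exists_congr fun U => ?_
  have htop : Submodule.span R (Set.range (W.mkQ ∘ U)) = ⊤ ↔ ∃ B : Fin n → Fin h → R,
      ∀ i r, (Pi.single i 1 - ∑ k, B i k • U k : Fin n → R) r ∈ powerIdeal x t := by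
    trans ∀ i, W.mkQ (Pi.single i 1) ∈ Submodule.span R (W.mkQ ∘ U '' Set.univ)
    · rw [Set.image_univ, eq_top_iff, ← W.range_mkQ, LinearMap.range_eq_map,
        ← (Pi.basisFun R (Fin n)).span_eq, Submodule.map_span, Submodule.span_le]
      simp [Set.subset_def]
    · simp only [mkQ_mem_span_image_iff_exists_coeff, ← mem_smul_top_pi, Set.mem_univ,
        not_true, false_imp_iff, implies_true, true_and, Classical.skolem, hW]
  have hstep : (∀ i, ∀ a ∈ Set.range x, a • (W.mkQ ∘ U) i ∈
        Submodule.span R (W.mkQ ∘ U '' Set.Iio i)) ↔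
      ∃ A : Fin d → Fin h → Fin h → R, (∀ j i k, i ≤ k → A j i k = 0) ∧
        ∀ j i r, (x j • U i - ∑ k, A j i k • U k) r ∈ powerIdeal x t := by
    trans ∀ j i, W.mkQ (x j • U i) ∈ Submodule.span R (W.mkQ ∘ U '' Set.Iio i)
    · simp only [Set.forall_mem_range, map_smul, Function.comp_apply]
      exact forall_comm
    simp only [mkQ_mem_span_image_iff_exists_coeff, ← mem_smul_top_pi, Classical.skolem,
      Set.mem_Iio, not_lt, forall_and, hW]
  rw [htop, hstep]
  simp only [← exists_and_left, ← exists_and_right, and_comm, and_assoc]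

theorem HasPowerFiltration.map {R' : Type v} [CommRing R'] (φ : R →+* R')
    (H : HasPowerFiltration x t n h) : HasPowerFiltration (φ ∘ x) t n h := by
  rw [hasPowerFiltration_iff_exists_coeff] at H ⊢
  obtain ⟨U, A, B, hA, hU, hB⟩ := H
  simp only [← map_powerIdeal]
  refine ⟨fun i => φ ∘ U i, fun j i => φ ∘ A j i, fun i => φ ∘ B i,
    fun j i k hik => by simp [hA j i k hik], fun j i r => ?_, fun i r => ?_⟩
  · simpa using Ideal.mem_map_of_mem φ (hU j i r)
  · simpa [Pi.single_apply, apply_ite φ] using Ideal.mem_map_of_mem φ (hB i r)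

theorem exists_finite_mem_powerIdeal {z : R} (hz : z ∈ powerIdeal x t) :
    ∃ Q : Set R, Q.Finite ∧ ∀ {T : Type v} [CommRing T] (f : T →+* R) (_ : Function.Injective f)
      (y : Fin d → T) (_ : f ∘ y = x) (_ : Q ⊆ Set.range f) (w : T), f w = z →
        w ∈ powerIdeal y t := by
  obtain ⟨c, rfl⟩ := Ideal.mem_span_range_iff_exists_fun.1 hz
  refine ⟨Set.range c, Set.finite_range c, fun f hf y hy hc w hw => ?_⟩
  choose c' hc' using fun i => hc ⟨i, rfl⟩
  refine Ideal.mem_span_range_iff_exists_fun.2 ⟨c', hf ?_⟩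
  subst hy
  simp [hc', hw]

theorem HasPowerFiltration.exists_finite_descent (H : HasPowerFiltration x t n h) :
    ∃ Q : Set R, Q.Finite ∧ ∀ {T : Type v} [CommRing T] (f : T →+* R) (_ : Function.Injective f)
      (y : Fin d → T) (_ : f ∘ y = x) (_ : Q ⊆ Set.range f), HasPowerFiltration y t n h := by
  obtain ⟨U, A, B, hA, hU, hB⟩ := hasPowerFiltration_iff_exists_coeff.1 H
  choose QU hQU hU using fun j i r => exists_finite_mem_powerIdeal (hU j i r)
  choose QB hQB hB using fun i r => exists_finite_mem_powerIdeal (hB i r)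
  refine ⟨(⋃ i, Set.range (U i)) ∪ (⋃ j, ⋃ i, Set.range (A j i)) ∪ (⋃ i, Set.range (B i)) ∪
    (⋃ j, ⋃ i, ⋃ r, QU j i r) ∪ ⋃ i, ⋃ r, QB i r, ?_, fun {T} _ f hf y hy hQ => ?_⟩
  · exact (((Set.finite_iUnion fun i => Set.finite_range _).union
      (Set.finite_iUnion fun j => Set.finite_iUnion fun i => Set.finite_range _)).union
      (Set.finite_iUnion fun i => Set.finite_range _)).union
      (Set.finite_iUnion fun j => Set.finite_iUnion fun i => Set.finite_iUnion (hQU j i)) |>.union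
      (Set.finite_iUnion fun i => Set.finite_iUnion (hQB i))
  · simp only [Set.union_subset_iff, Set.iUnion_subset_iff, Set.range_subset_iff,
      Set.mem_range] at hQ
    obtain ⟨⟨⟨⟨hU', hA'⟩, hB'⟩, hQU'⟩, hQB'⟩ := hQ
    choose U' hU' using hU'
    choose A' hA' using hA'
    choose B' hB' using hB'
    refine hasPowerFiltration_iff_exists_coeff.2 ⟨U', A', B', fun j i k hik => hf ?_,
      fun j i r => hU j i r f hf y hy (hQU' j i r) _ ?_,
      fun i r => hB i r f hf y hy (hQB' i r) _ ?_⟩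
    · rw [hA', hA j i k hik, map_zero]
    · simp [hU', hA', ← hy]
    · simp [hU', hB', Pi.single_apply, apply_ite f]

theorem HasPowerFiltration.mul_length_le (H : HasPowerFiltration x t n h) :
    n * Module.length R (R ⧸ powerIdeal x t) ≤
      h * Module.length R (R ⧸ Ideal.span (Set.range x)) :=
  (length_pi_quotient_le _ n).trans (HasQLFiltration.length_le H)

theorem hasPowerFiltration_mul_prod (x : Fin d → R) (t : Fin d → ℕ) (n : ℕ) :
    HasPowerFiltration x t n (n * ∏ i, t i) :=
  hasQLFiltration_pi_quotient_powerIdeal x t n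

theorem length_quotient_powerIdeal_mul_le (x : Fin d → R) (s t : Fin d → ℕ) :
    Module.length R (R ⧸ powerIdeal x (s * t)) ≤
      (∏ i, t i : ℕ) * Module.length R (R ⧸ powerIdeal x s) := by
  have H := (hasPowerFiltration_mul_prod (fun i => x i ^ s i) t 1).mul_length_le
  rwa [powerIdeal_pow, Nat.cast_one, one_mul, one_mul] at H

end PowerFiltration

/-- Every `R^n / (x₁^{t₁}, …, x_d^{t_d}) R^n` has the largest possible quasilength
`n * t₁ ⋯ t_d`, the length of its filtration by monomials in the `xᵢ`. -/
def HasMaxQuasilength {R : Type u} [CommRing R] {d : ℕ} (x : Fin d → R) : Prop :=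
  ∀ t : Fin d → ℕ, (∀ i, 0 < t i) → ∀ n h, HasPowerFiltration x t n h → n * ∏ i, t i ≤ h

namespace HasMaxQuasilength

variable {R : Type u} [CommRing R] {d : ℕ} {x : Fin d → R}

theorem of_map {R' : Type v} [CommRing R'] (φ : R →+* R') (H : HasMaxQuasilength (φ ∘ x)) :
    HasMaxQuasilength x :=
  fun t ht n h hx => H t ht n h (hx.map φ)

theorem quasilength_eq (H : HasMaxQuasilength x) {t : Fin d → ℕ} (ht : ∀ i, 0 < t i) (n : ℕ) :
    quasilength R (Ideal.span (Set.range x))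
      ((Fin n → R) ⧸ (powerIdeal x t • (⊤ : Submodule R (Fin n → R)))) =
        (n * ∏ i, t i : ℕ) := by
  refine le_antisymm (sInf_le ⟨_, rfl, hasPowerFiltration_mul_prod x t n⟩) (le_sInf ?_)
  rintro _ ⟨h, rfl, hh⟩
  exact_mod_cast H t ht n h hh

theorem content_pi_eq (H : HasMaxQuasilength x) (n : ℕ) : content x (Fin n → R) = n := by
  have hratio (s : ℕ) (t : {t : Fin d → ℕ // ∀ i, s ≤ t i ∧ 0 < t i}) :
      (quasilength R (Ideal.span (Set.range x))
        ((Fin n → R) ⧸ (powerIdeal x (t : Fin d → ℕ) • (⊤ : Submodule R (Fin n → R)))) : ℝ≥0∞) /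
          ∏ i, ((t : Fin d → ℕ) i : ℝ≥0∞) = n := by
    have hprod : ∏ i, t.1 i ≠ 0 := Finset.prod_ne_zero_iff.2 fun i _ => (t.2 i).2.ne'
    rw [H.quasilength_eq fun i => (t.2 i).2, ENat.toENNReal_coe, Nat.cast_mul, ← Nat.cast_prod]
    exact ENNReal.mul_div_cancel_right (by exact_mod_cast hprod) (ENNReal.natCast_ne_top _)
  have hne (s : ℕ) : Nonempty {t : Fin d → ℕ // ∀ i, s ≤ t i ∧ 0 < t i} :=
    ⟨⟨fun _ => s + 1, fun i => ⟨Nat.le_succ s, Nat.succ_pos s⟩⟩⟩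
  simp only [content, hratio, ciInf_const, ciSup_const]

end HasMaxQuasilength

section Growth

open Filter Topology

variable {d : ℕ} {f : (Fin d → ℕ) → ℕ} {p : ℕ}

theorem exists_tendsto_div_pow_of_mul_le (hp : 0 < p)
    (hmul : ∀ s m, f (s * m) ≤ (∏ i, m i) * f s) {K : ℕ}
    (hlow : ∀ N, 0 < N → N ^ d ≤ K * f fun _ => N) :
    ∃ ℓ : ℝ, 0 < ℓ ∧
      Tendsto (fun e => (f fun _ => p ^ e : ℝ) / ((p : ℝ) ^ e) ^ d) atTop (𝓝 ℓ) := by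
  set a : ℕ → ℝ := fun e => (f fun _ => p ^ e : ℝ) / ((p : ℝ) ^ e) ^ d
  have : (0 : ℝ) < p := Nat.cast_pos.2 hp
  have hK : 0 < K := Nat.pos_of_ne_zero fun h => by simpa [h] using hlow 1 one_pos
  have ha : Antitone a := antitone_nat_of_succ_le fun e => by
    have h : (f fun _ => p ^ (e + 1)) ≤ p ^ d * f fun _ => p ^ e := by
      have hpow : (fun _ : Fin d => p ^ (e + 1)) = (fun _ => p ^ e) * fun _ => p :=
        funext fun _ => pow_succ p e
      rw [hpow]
      exact (hmul _ _).trans_eq (by simp)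
    rw [div_le_div_iff₀ (by positivity) (by positivity)]
    calc ((f fun _ => p ^ (e + 1) : ℕ) : ℝ) * ((p : ℝ) ^ e) ^ d
        ≤ ((p ^ d * f fun _ => p ^ e : ℕ) : ℝ) * ((p : ℝ) ^ e) ^ d := by gcongr
      _ = _ := by push_cast; ring
  have hbound (e : ℕ) : 1 / (K : ℝ) ≤ a e := by
    rw [div_le_div_iff₀ (by positivity) (by positivity), one_mul, mul_comm]
    exact_mod_cast hlow (p ^ e) (pow_pos hp e)
  exact ⟨⨅ e, a e, (by positivity : (0 : ℝ) < 1 / K).trans_le (le_ciInf hbound),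
    tendsto_atTop_ciInf ha ⟨_, Set.forall_mem_range.2 hbound⟩⟩

theorem prod_div_add_one_div_pow_le (t : Fin d → ℕ) (hp : 0 < p) (k : ℕ) :
    ∏ i, (((p ^ k / t i + 1 : ℕ) : ℝ) / (p : ℝ) ^ k) ≤
      ∏ i, (1 / (t i : ℝ) + (1 / (p : ℝ)) ^ k) := by
  refine Finset.prod_le_prod (fun i _ => by positivity) fun i _ => ?_
  have hpk : (0 : ℝ) < (p : ℝ) ^ k := by positivity
  have hdiv : ((p ^ k / t i : ℕ) : ℝ) ≤ (p : ℝ) ^ k / t i := by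
    exact_mod_cast Nat.cast_div_le (α := ℝ)
  calc ((p ^ k / t i + 1 : ℕ) : ℝ) / (p : ℝ) ^ k
      ≤ ((p : ℝ) ^ k / t i + 1) / (p : ℝ) ^ k := by push_cast; gcongr
    _ = 1 / (t i : ℝ) + (1 / (p : ℝ)) ^ k := by
        rw [add_div, div_right_comm, div_self hpk.ne', one_div_pow]

theorem mul_prod_le_of_pow_le {t : Fin d → ℕ} (ht : ∀ i, 0 < t i) {n h : ℕ} (hp : 1 < p)
    (hmono : Monotone f) (hmul : ∀ s m, f (s * m) ≤ (∏ i, m i) * f s)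
    (hnh : ∀ e, n * f (fun i => p ^ e * t i) ≤ h * f fun _ => p ^ e)
    {K : ℕ} (hlow : ∀ N, 0 < N → N ^ d ≤ K * f fun _ => N) :
    n * ∏ i, t i ≤ h := by
  have hp₀ : 0 < p := zero_lt_one.trans hp
  obtain ⟨ℓ, hℓ, hlim⟩ := exists_tendsto_div_pow_of_mul_le hp₀ hmul hlow
  have hstep (k e : ℕ) : n * ((f fun _ => p ^ (e + k) : ℝ) / ((p : ℝ) ^ (e + k)) ^ d) ≤
      h * (∏ i, (((p ^ k / t i + 1 : ℕ) : ℝ) / (p : ℝ) ^ k)) *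
        ((f fun _ => p ^ e : ℝ) / ((p : ℝ) ^ e) ^ d) := by
    set m : Fin d → ℕ := fun i => p ^ k / t i + 1
    have hm : (fun _ => p ^ (e + k)) ≤ (fun i => p ^ e * t i) * m := fun i => by
      rw [Pi.mul_apply, pow_add, mul_assoc]
      exact Nat.mul_le_mul_left _ (Nat.lt_mul_div_succ _ (ht i)).le
    have hf : n * (f fun _ => p ^ (e + k)) ≤ h * (∏ i, m i) * f fun _ => p ^ e :=
      calc n * (f fun _ => p ^ (e + k)) ≤ n * ((∏ i, m i) * f fun i => p ^ e * t i) :=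
            Nat.mul_le_mul_left _ ((hmono hm).trans (hmul _ m))
        _ = (∏ i, m i) * (n * f fun i => p ^ e * t i) := by ring
        _ ≤ (∏ i, m i) * (h * f fun _ => p ^ e) := Nat.mul_le_mul_left _ (hnh e)
        _ = _ := by ring
    have : (0 : ℝ) < p := Nat.cast_pos.2 hp₀
    rw [Finset.prod_div_distrib, Finset.prod_const, Finset.card_fin, ← mul_div_assoc (n : ℝ),
      ← mul_div_assoc (h : ℝ), div_mul_div_comm, mul_comm ((_ ^ k) ^ d), ← mul_pow, ← pow_add]
    refine (div_le_div_iff_of_pos_right (by positivity)).2 ?_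
    exact_mod_cast hf
  have hk (k : ℕ) : (n : ℝ) ≤ h * ∏ i, (((p ^ k / t i + 1 : ℕ) : ℝ) / (p : ℝ) ^ k) :=
    le_of_mul_le_mul_right (le_of_tendsto_of_tendsto'
      ((hlim.comp (tendsto_add_atTop_nat k)).const_mul _) (hlim.const_mul _) (hstep k)) hℓ
  have hlim' : Tendsto (fun k : ℕ => (h : ℝ) * ∏ i, (1 / (t i : ℝ) + (1 / (p : ℝ)) ^ k)) atTop
      (𝓝 (h * ∏ i, (1 / (t i : ℝ) + 0))) :=
    (tendsto_finsetProd _ fun i _ => (tendsto_pow_atTop_nhds_zero_of_lt_one (by positivity)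
      ((div_lt_one (by positivity)).2 (by exact_mod_cast hp))).const_add _).const_mul _
  have hn : (n : ℝ) ≤ h * ∏ i, (1 / (t i : ℝ) + 0) := ge_of_tendsto' hlim' fun k =>
    (hk k).trans (mul_le_mul_of_nonneg_left (prod_div_add_one_div_pow_le t hp₀ k) (by positivity))
  have hprod : (0 : ℝ) < ∏ i, (t i : ℝ) := Finset.prod_pos fun i _ => Nat.cast_pos.2 (ht i)
  simp only [add_zero, one_div, Finset.prod_inv_distrib, ← div_eq_mul_inv, le_div_iff₀ hprod] at hn
  exact_mod_cast hn

end Growth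

section LengthGrowth

open IsLocalRing

theorem exists_isPrime_le_ringKrullDim_quotient {R : Type*} [CommRing R] {d : ℕ}
    (h : (d : WithBot ℕ∞) ≤ ringKrullDim R) :
    ∃ P : Ideal R, P.IsPrime ∧ (d : WithBot ℕ∞) ≤ ringKrullDim (R ⧸ P) := by
  obtain ⟨l, hl⟩ := Order.le_krullDim_iff.1 h
  refine ⟨l.head.asIdeal, l.head.isPrime, ?_⟩
  rw [ringKrullDim_quotient, Order.le_krullDim_iff]
  exact ⟨⟨l.length, fun i => ⟨l i, LTSeries.head_le l i⟩, fun i => l.step i⟩, hl⟩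

theorem length_quotient_anti (B : Type*) {R : Type*} [CommRing B] [CommRing R] [Algebra B R]
    {I J : Ideal R} (h : I ≤ J) : Module.length B (R ⧸ J) ≤ Module.length B (R ⧸ I) :=
  Module.length_le_of_surjective (Ideal.Quotient.factorₐ B h).toLinearMap
    (Ideal.Quotient.factor_surjective h)

theorem length_quotient_le_of_map_le {R S : Type*} [CommRing R] [CommRing S] {φ : R →+* S}
    (hφ : Function.Surjective φ) {I : Ideal R} {J : Ideal S} (hIJ : I.map φ ≤ J) :
    Module.length S (S ⧸ J) ≤ Module.length R (R ⧸ I) := by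
  algebraize [φ]
  rw [← Module.length_eq_of_surjective (S := R) (R := S) (M := S ⧸ J) hφ]
  exact Module.length_le_of_surjective
    (Ideal.quotientMapₐ J (Algebra.ofId R S) (Ideal.map_le_iff_le_comap.1 hIJ)).toLinearMap
    (Ideal.quotientMap_surjective (H := Ideal.map_le_iff_le_comap.1 hIJ) hφ)

theorem length_quotient_maximalIdeal_pow_le_of_surjective {R S : Type*} [CommRing R] [CommRing S]
    [IsLocalRing R] [IsLocalRing S] {φ : R →+* S} (hφ : Function.Surjective φ) (n : ℕ) :
    Module.length S (S ⧸ maximalIdeal S ^ n) ≤ Module.length R (R ⧸ maximalIdeal R ^ n) := by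
  refine length_quotient_le_of_map_le hφ ?_
  rw [Ideal.map_pow]
  refine Ideal.pow_right_mono ?_ n
  have := IsLocalHom.of_surjective φ hφ
  exact ((local_hom_TFAE φ).out 0 2).1 this

theorem exists_pos_forall_mem_pow_sub {R : Type*} [CommRing R] [IsDomain R] [IsNoetherianRing R]
    (m : Ideal R) {x : R} (hx : x ≠ 0) :
    ∃ k : ℕ, 0 < k ∧ ∀ n, k ≤ n → ∀ a, x * a ∈ m ^ n → a ∈ m ^ (n - k) := by
  obtain ⟨k, hk⟩ := Ideal.exists_pow_inf_eq_pow_smul (M := R) m (Ideal.span {x})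
  refine ⟨k + 1, Nat.succ_pos _, fun n hn a ha => ?_⟩
  have hmem : x * a ∈ (m ^ n • ⊤ ⊓ Ideal.span {x} : Ideal R) :=
    ⟨by simpa using ha, Ideal.mem_span_singleton.2 ⟨a, rfl⟩⟩
  rw [hk n (by omega)] at hmem
  obtain ⟨z, hz, hzx⟩ := Ideal.mem_mul_span_singleton.1
    (Submodule.smul_mono le_rfl inf_le_right hmem : x * a ∈ m ^ (n - k) * Ideal.span {x})
  rw [mul_comm] at hzx
  exact Ideal.pow_le_pow_right (by omega) (mul_left_cancel₀ hx hzx ▸ hz)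

theorem length_quotient_add_length_quotient_sup_span_le {R : Type*} [CommRing R] {I J : Ideal R}
    {x : R} (h : ∀ a, x * a ∈ I → a ∈ J) :
    Module.length R (R ⧸ J) + Module.length R (R ⧸ I ⊔ Ideal.span {x}) ≤
      Module.length R (R ⧸ I) := by
  let f : R →ₗ[R] R ⧸ I := I.mkQ ∘ₗ LinearMap.mulLeft R x
  let q := Submodule.factor (le_sup_left : I ≤ I ⊔ Ideal.span {x})
  have hker : LinearMap.ker f ≤ J := fun a ha => h a ((Submodule.Quotient.mk_eq_zero _).1 ha)
  have hrange : LinearMap.range f ≤ LinearMap.ker q := by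
    rintro _ ⟨a, rfl⟩
    exact (Submodule.Quotient.mk_eq_zero _).2
      (Ideal.mem_sup_right (Ideal.mem_span_singleton.2 ⟨a, rfl⟩))
  rw [Module.length_eq_add_of_exact (LinearMap.range f).subtype (LinearMap.range f).mkQ
    Subtype.val_injective (Submodule.mkQ_surjective _)
    (LinearMap.exact_subtype_mkQ _), ← f.quotKerEquivRange.length_eq]
  refine add_le_add
    (Module.length_le_of_surjective (Submodule.factor hker) (Submodule.factor_surjective hker))
    (Module.length_le_of_surjective (Submodule.liftQ _ q hrange) fun y => ?_)
  obtain ⟨z, rfl⟩ := Submodule.factor_surjective (le_sup_left : I ≤ I ⊔ Ideal.span {x}) y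
  exact ⟨Submodule.Quotient.mk z, rfl⟩

theorem pow_succ_le_sub_pow_succ_add {n k : ℕ} (d : ℕ) (hk : k ≤ n) :
    n ^ (d + 1) ≤ (n - k) ^ (d + 1) + (d + 1) * k * n ^ d := by
  obtain ⟨m, rfl⟩ := Nat.exists_eq_add_of_le hk
  rw [Nat.add_sub_cancel_left]
  induction d with
  | zero => simp [add_comm]
  | succ d ih =>
    have : m ^ (d + 1) ≤ (k + m) ^ (d + 1) := Nat.pow_le_pow_left (by omega) _
    calc (k + m) ^ (d + 1 + 1) = m * (k + m) ^ (d + 1) + k * (k + m) ^ (d + 1) := by ring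
      _ ≤ m * (m ^ (d + 1) + (d + 1) * k * (k + m) ^ d) + k * (k + m) ^ (d + 1) := by
        gcongr
      _ = m ^ (d + 1 + 1) + (d + 1) * k * (m * (k + m) ^ d) + k * (k + m) ^ (d + 1) := by ring
      _ ≤ m ^ (d + 1 + 1) + (d + 1) * k * ((k + m) * (k + m) ^ d) + k * (k + m) ^ (d + 1) := by
        gcongr; omega
      _ = _ := by ring

theorem pow_succ_le_mul_of_add_le {L g : ℕ → ℕ∞} {d k K : ℕ} (hk : 0 < k)
    (hL : ∀ n, k ≤ n → L (n - k) + g n ≤ L n) (hgL : ∀ n, g n ≤ L n)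
    (hg : ∀ n, 0 < n → ((n ^ d : ℕ) : ℕ∞) ≤ K * g n) :
    ∀ n, 0 < n → ((n ^ (d + 1) : ℕ) : ℕ∞) ≤ ((d + 1) * k * K : ℕ) * L n := by
  have hg' (n : ℕ) (hn : 0 < n) :
      (((d + 1) * k * n ^ d : ℕ) : ℕ∞) ≤ ((d + 1) * k * K : ℕ) * g n := by
    rw [Nat.cast_mul, Nat.cast_mul _ K, mul_assoc]
    gcongr
    exact hg n hn
  intro n
  induction n using Nat.strong_induction_on with
  | _ n ih =>
    intro hn
    rcases lt_or_ge k n with hkn | hnk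
    · calc ((n ^ (d + 1) : ℕ) : ℕ∞)
          ≤ ((n - k) ^ (d + 1) : ℕ) + ((d + 1) * k * n ^ d : ℕ) := by
            exact_mod_cast pow_succ_le_sub_pow_succ_add d hkn.le
        _ ≤ ((d + 1) * k * K : ℕ) * L (n - k) + ((d + 1) * k * K : ℕ) * g n :=
            add_le_add (ih _ (by omega) (by omega)) (hg' n hn)
        _ ≤ ((d + 1) * k * K : ℕ) * L n := by
            rw [← mul_add]
            gcongr
            exact hL n hkn.le
    · calc ((n ^ (d + 1) : ℕ) : ℕ∞) ≤ ((d + 1) * k * n ^ d : ℕ) := by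
            rw [pow_succ', Nat.cast_le]
            gcongr
            exact hnk.trans (Nat.le_mul_of_pos_left k d.succ_pos)
        _ ≤ ((d + 1) * k * K : ℕ) * g n := hg' n hn
        _ ≤ ((d + 1) * k * K : ℕ) * L n := by
            gcongr
            exact hgL n

theorem exists_ne_zero_mem_maximalIdeal_of_one_le_ringKrullDim {R : Type*} [CommRing R]
    [IsLocalRing R] (h : 1 ≤ ringKrullDim R) : ∃ x ∈ maximalIdeal R, x ≠ 0 := by
  by_contra! hcon
  have hF : IsField R := isField_iff_maximalIdeal_eq.2 ((Submodule.eq_bot_iff _).2 hcon)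
  rw [ringKrullDim_eq_zero_of_isField hF] at h
  exact absurd h (by decide)

theorem exists_pow_le_mul_length_quotient_maximalIdeal_pow {d : ℕ} :
    ∀ {R : Type u} [CommRing R] [IsLocalRing R] [IsNoetherianRing R],
      (d : WithBot ℕ∞) ≤ ringKrullDim R → ∃ K : ℕ, ∀ n : ℕ, 0 < n →
        ((n ^ d : ℕ) : ℕ∞) ≤ K * Module.length R (R ⧸ maximalIdeal R ^ n) := by
  induction d with
  | zero =>
    intro R _ _ _ _
    refine ⟨1, fun n hn => ?_⟩
    have : Nontrivial (R ⧸ maximalIdeal R ^ n) := Ideal.Quotient.nontrivial_iff.2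
      (ne_top_of_le_ne_top (Ideal.IsPrime.ne_top' ) (Ideal.pow_le_self hn.ne'))
    simpa using Order.one_le_iff_pos.2 (Module.length_pos (R := R) (M := R ⧸ maximalIdeal R ^ n))
  | succ d ih =>
    intro R _ _ _ hdim
    obtain ⟨P, hP, hPd⟩ := exists_isPrime_le_ringKrullDim_quotient hdim
    have : IsLocalRing (R ⧸ P) := .of_surjective' (Ideal.Quotient.mk P) Ideal.Quotient.mk_surjective
    obtain ⟨x, hxm, hx⟩ := exists_ne_zero_mem_maximalIdeal_of_one_le_ringKrullDim
      (le_trans (by exact_mod_cast Nat.le_add_left 1 d) hPd)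
    set I := Ideal.span {x}
    have : Nontrivial ((R ⧸ P) ⧸ I) := Ideal.Quotient.nontrivial_iff.2
      (ne_top_of_le_ne_top Ideal.IsPrime.ne_top' ((Ideal.span_singleton_le_iff_mem _).2 hxm))
    have : IsLocalRing ((R ⧸ P) ⧸ I) := .of_surjective' _ Ideal.Quotient.mk_surjective
    have hdimI : (d : WithBot ℕ∞) ≤ ringKrullDim ((R ⧸ P) ⧸ I) := by
      rw [← ringKrullDim_quotient_span_singleton_succ_eq_ringKrullDim_of_mem_nonZeroDivisors
        (mem_nonZeroDivisors_of_ne_zero hx) hxm, Nat.cast_add, Nat.cast_one] at hPd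
      exact ENat.WithBot.add_le_add_one_right_iff.1 hPd
    obtain ⟨K, hK⟩ := ih hdimI
    obtain ⟨k, hk₀, hk⟩ := exists_pos_forall_mem_pow_sub (maximalIdeal (R ⧸ P)) hx
    have hlen (n : ℕ) :
        Module.length ((R ⧸ P) ⧸ I) (((R ⧸ P) ⧸ I) ⧸ maximalIdeal ((R ⧸ P) ⧸ I) ^ n) ≤
          Module.length (R ⧸ P) ((R ⧸ P) ⧸ maximalIdeal (R ⧸ P) ^ n ⊔ I) := by
      have := IsLocalHom.of_surjective (Ideal.Quotient.mk I) Ideal.Quotient.mk_surjective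
      refine length_quotient_le_of_map_le (φ := Ideal.Quotient.mk I)
        Ideal.Quotient.mk_surjective ?_
      rw [Ideal.map_sup, Ideal.map_pow, Ideal.map_quotient_self, sup_bot_eq]
      exact Ideal.pow_right_mono (((local_hom_TFAE (Ideal.Quotient.mk I)).out 0 2).1 this) n
    refine ⟨(d + 1) * k * K, fun n hn => (pow_succ_le_mul_of_add_le hk₀
      (fun n hn => length_quotient_add_length_quotient_sup_span_le (hk n hn))
      (fun n => length_quotient_anti _ le_sup_left)
      (fun n hn => (hK n hn).trans (mul_le_mul_right (hlen n) _)) n hn).trans ?_⟩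
    gcongr
    exact length_quotient_maximalIdeal_pow_le_of_surjective Ideal.Quotient.mk_surjective n

end LengthGrowth

section CharP

open IsLocalRing

variable {R : Type u} [CommRing R] {d : ℕ} {x : Fin d → R}

theorem length_quotient_powerIdeal_ne_top
    (hx : Module.length R (R ⧸ Ideal.span (Set.range x)) ≠ ⊤) (s : Fin d → ℕ) :
    Module.length R (R ⧸ powerIdeal x s) ≠ ⊤ := by
  have h := length_quotient_powerIdeal_mul_le x 1 s
  rw [one_mul, show powerIdeal x 1 = Ideal.span (Set.range x) by simp [powerIdeal]] at h
  exact ne_top_of_le_ne_top (WithTop.mul_ne_top (ENat.natCast_ne_top _) hx) h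

theorem hasMaxQuasilength_of_pow_le_mul_length {p : ℕ} [Fact p.Prime] [CharP R p]
    (hx : Module.length R (R ⧸ Ideal.span (Set.range x)) ≠ ⊤) {K : ℕ}
    (hK : ∀ N, 0 < N → ((N ^ d : ℕ) : ℕ∞) ≤ K * Module.length R (R ⧸ powerIdeal x fun _ => N)) :
    HasMaxQuasilength x := by
  have hne := length_quotient_powerIdeal_ne_top hx
  set f : (Fin d → ℕ) → ℕ := fun s => (Module.length R (R ⧸ powerIdeal x s)).toNat
  have hf (s : Fin d → ℕ) : Module.length R (R ⧸ powerIdeal x s) = f s :=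
    (ENat.natCast_toNat (hne s)).symm
  intro t ht n h H
  refine mul_prod_le_of_pow_le (f := f) ht (Fact.out : p.Prime).one_lt
    (fun s m hsm => ENat.toNat_le_toNat (length_quotient_anti R (powerIdeal_anti x hsm)) (hne m))
    (fun s m => ?_) (fun e => ?_) (K := K) fun N hN => ?_
  · have := length_quotient_powerIdeal_mul_le x s m
    rw [hf, hf] at this
    exact_mod_cast this
  · have hfrob : iterateFrobenius R p e ∘ x = fun i => x i ^ p ^ e := funext fun i => rfl
    have hlen := (H.map (iterateFrobenius R p e)).mul_length_le
    rw [hfrob, powerIdeal_pow, ← powerIdeal.eq_1 x fun _ => p ^ e, hf, hf] at hlen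
    exact_mod_cast hlen
  · have := hK N hN
    rw [hf] at this
    exact_mod_cast this

theorem powerIdeal_const_le_pow {I : Ideal R} (hx : ∀ i, x i ∈ I) (N : ℕ) :
    (powerIdeal x fun _ => N) ≤ I ^ N :=
  Ideal.span_le.2 (Set.range_subset_iff.2 fun i => Ideal.pow_mem_pow (hx i) N)

theorem length_quotient_ne_top_of_radical_eq [IsLocalRing R] [IsNoetherianRing R] {I : Ideal R}
    (hI : I.radical = maximalIdeal R) : Module.length R (R ⧸ I) ≠ ⊤ := by
  have : IsArtinianRing (R ⧸ I) := by
    refine quotient_artinian_of_mem_minimalPrimes_of_isLocalRing I ?_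
    rw [← Ideal.radical_minimalPrimes, hI, Ideal.minimalPrimes_eq_subsingleton_self]
    rfl
  rw [Module.length_eq_of_surjective (S := R) (R := R ⧸ I) (M := R ⧸ I)
    Ideal.Quotient.mk_surjective]
  exact Module.length_ne_top

theorem hasMaxQuasilength_of_charP [IsLocalRing R] [IsNoetherianRing R] (p : ℕ) [Fact p.Prime]
    [CharP R p] (hd : (d : WithBot ℕ∞) ≤ ringKrullDim R)
    (hx : (Ideal.span (Set.range x)).radical = maximalIdeal R) : HasMaxQuasilength x := by
  obtain ⟨K, hK⟩ := exists_pow_le_mul_length_quotient_maximalIdeal_pow hd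
  have hxm (i : Fin d) : x i ∈ maximalIdeal R :=
    hx ▸ Ideal.le_radical (Ideal.subset_span ⟨i, rfl⟩)
  refine hasMaxQuasilength_of_pow_le_mul_length (p := p)
    (length_quotient_ne_top_of_radical_eq hx) (K := K) fun N hN => (hK N hN).trans ?_
  gcongr
  exact length_quotient_anti R (powerIdeal_const_le_pow hxm N)

end CharP

section LiftingHoms

open Polynomial

theorem sub_mem_pow_of_le {A : Type*} [CommRing A] {I : Ideal A} {s : ℕ → A}
    (hs : ∀ n, s n - s (n + 1) ∈ I ^ n) {m n : ℕ} (hmn : m ≤ n) : s m - s n ∈ I ^ m := by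
  induction n, hmn using Nat.le_induction with
  | base => simp
  | succ n hmn ih =>
    rw [← sub_add_sub_cancel (s m) (s n)]
    exact add_mem ih (Ideal.pow_le_pow_right hmn (hs n))

theorem exists_apply_eq_self_of_sub_mem_pow_succ {A : Type*} [CommRing A] (I : Ideal A)
    [IsAdicComplete I A] (T : A → A)
    (hT : ∀ a b n, a - b ∈ I ^ n → T a - T b ∈ I ^ (n + 1)) : ∃ a, T a = a := by
  have hstep (n : ℕ) : T^[n] 0 - T^[n + 1] 0 ∈ I ^ n := by
    induction n with
    | zero => simp
    | succ n ih => simpa only [Function.iterate_succ_apply'] using hT _ _ _ ih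
  obtain ⟨a, ha⟩ := IsPrecomplete.prec (I := I) (M := A) inferInstance (f := fun n ↦ T^[n] 0)
    fun hmn ↦ SModEq.sub_mem.2 (by simpa using sub_mem_pow_of_le hstep hmn)
  have ha' (n : ℕ) : T^[n] 0 - a ∈ I ^ n := by simpa using SModEq.sub_mem.1 (ha n)
  refine ⟨a, sub_eq_zero.1 (IsHausdorff.haus (I := I) inferInstance _ fun n ↦ ?_)⟩
  have hn : T^[n + 1] 0 - a - (T (T^[n] 0) - T a) ∈ I ^ n :=
    Ideal.pow_le_pow_right n.le_succ (sub_mem (ha' (n + 1)) (hT _ _ _ (ha' n)))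
  rw [Function.iterate_succ_apply', sub_sub_sub_cancel_left] at hn
  exact SModEq.sub_mem.2 (by simpa using hn)

theorem exists_eval_add_mul_eq {A : Type*} [CommRing A] (F : A[X]) (a δ : A) :
    ∃ q : A[X], ∀ y, F.eval (a + δ * y) =
      F.eval a + F.derivative.eval a * (δ * y) + δ ^ 2 * y ^ 2 * q.eval y := by
  obtain ⟨q, hq⟩ := (F.map C).binomExpansion (C a) (C δ * X)
  refine ⟨q, fun y ↦ ?_⟩
  have h := congrArg (eval y) hq
  simp only [eval_map, derivative_map, eval₂_at_apply, eval_add, eval_mul, eval_pow, eval_C, eval_X]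
    at h
  rw [← comp, eval_comp] at h
  simp only [eval_add, eval_mul, eval_C, eval_X] at h
  rw [h]
  ring

theorem exists_isRoot_of_eval_eq_derivative_sq_mul {A : Type*} [CommRing A] (I : Ideal A)
    [IsAdicComplete I A] {F : A[X]} {a ε : A} (hε : ε ∈ I)
    (h : F.eval a = F.derivative.eval a ^ 2 * ε) :
    ∃ b, F.IsRoot b ∧ F.derivative.eval a * ε ∣ b - a := by
  obtain ⟨q, hq⟩ := exists_eval_add_mul_eq F a (F.derivative.eval a)
  set δ := F.derivative.eval a
  -- The root is `a - δ * ε * w`, where `w` is a fixed point of `w ↦ 1 + ε * w ^ 2 * q(-ε * w)`.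
  let Q : A[X] := X ^ 2 * q.comp (-(C ε * X))
  obtain ⟨w, hw⟩ := exists_apply_eq_self_of_sub_mem_pow_succ I (fun w ↦ 1 + ε * Q.eval w) <| by
    intro w w' n hn
    obtain ⟨c, hc⟩ := sub_dvd_eval_sub w w' Q
    rw [add_sub_add_left_eq_sub, ← mul_sub, hc, pow_succ']
    exact Ideal.mul_mem_mul hε (Ideal.mul_mem_right _ _ hn)
  refine ⟨a + δ * (-(ε * w)), ?_, -w, by ring⟩
  simp only [Q, eval_mul, eval_pow, eval_X, eval_comp, eval_neg, eval_C] at hw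
  rw [IsRoot, hq, h]
  linear_combination δ ^ 2 * ε * hw

theorem exists_isRoot_of_derivative_congr {D : Type*} [CommRing D] (I : Ideal D)
    [IsAdicComplete I D] {F : D[X]} {a c ϖ γ : D} (hϖ : ϖ ∈ I)
    (hF : (ϖ * γ) ^ 3 ∣ F.eval a) (hF' : (ϖ * γ) ^ 3 ∣ c * F.derivative.eval a - γ) :
    ∃ b, F.IsRoot b ∧ ϖ ^ 3 * γ ∣ b - a := by
  obtain ⟨y, hy⟩ := hF
  obtain ⟨z, hz⟩ := hF'
  obtain ⟨v, hv⟩ : IsUnit (1 + ϖ * (ϖ ^ 2 * γ ^ 2 * z)) := by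
    rw [add_comm]
    exact Ideal.mem_jacobson_bot.1 (IsAdicComplete.le_jacobson_bot I hϖ) _
  have hγδ : γ = F.derivative.eval a * (c * ↑v⁻¹) := by
    rw [← mul_assoc, mul_comm _ c, ← Units.mul_inv_eq_iff_eq_mul, inv_inv, hv]
    linear_combination -hz
  obtain ⟨b, hb, hba⟩ := exists_isRoot_of_eval_eq_derivative_sq_mul I
    (F := F) (a := a) (ε := ϖ ^ 3 * γ * (c * ↑v⁻¹) ^ 2 * y)
    (I.mem_of_dvd ⟨ϖ ^ 2 * γ * (c * ↑v⁻¹) ^ 2 * y, by ring⟩ hϖ) (by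
      rw [hy]
      linear_combination ϖ ^ 3 * γ * y * (γ + F.derivative.eval a * (c * ↑v⁻¹)) * hγδ)
  exact ⟨b, hb, dvd_trans ⟨F.derivative.eval a * (c * ↑v⁻¹) ^ 2 * y, by ring⟩ hba⟩

theorem exists_algHom_extending {P S D : Type*} [CommRing P] [CommRing S] [CommRing D]
    [IsDomain D] [Algebra P S] [Algebra P D] {A : Subalgebra P S} (ψ : A →ₐ[P] D) {g : P}
    (hg : algebraMap P D g ≠ 0) {W : Set S} (hW : Algebra.adjoin P W = ⊤)
    (h : ∀ w ∈ W, ∃ (a : A) (b : D), g • w = a ∧ g • b = ψ a) :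
    ∃ Ψ : S →ₐ[P] D, ∀ a : A, Ψ a = ψ a := by
  let Γ : Subalgebra P (S × D) :=
    { carrier := {q | ∃ N a, g ^ N • q = A.val.prod ψ a}
      mul_mem' := by
        rintro q q' ⟨N, a, h⟩ ⟨N', a', h'⟩
        exact ⟨N + N', a * a', by rw [pow_add, map_mul, ← h, ← h', smul_mul_smul_comm]⟩
      add_mem' := by
        rintro q q' ⟨N, a, h⟩ ⟨N', a', h'⟩
        refine ⟨N + N', g ^ N' • a + g ^ N • a', ?_⟩
        rw [map_add, map_smul, map_smul, ← h, ← h', smul_smul, smul_smul, ← pow_add, ← pow_add,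
          add_comm N', smul_add]
      algebraMap_mem' := fun r ↦
        ⟨0, algebraMap P A r, by rw [pow_zero, one_smul, AlgHom.commutes]⟩ }
  let π : Γ →ₐ[P] S := (AlgHom.fst P S D).comp Γ.val
  have hπ : Function.Injective π := by
    rw [injective_iff_map_eq_zero]
    rintro ⟨⟨s, y⟩, N, a, h⟩ rfl
    have ha : a = 0 := Subtype.ext ((congrArg Prod.fst h).symm.trans (smul_zero (g ^ N)))
    have hy : g ^ N • y = 0 := (congrArg Prod.snd h).trans (by rw [ha, map_zero]; rfl)
    rw [Algebra.smul_def, map_pow] at hy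
    exact Subtype.ext (Prod.ext rfl ((mul_eq_zero.1 hy).resolve_left (pow_ne_zero N hg)))
  have hπ' : Function.Surjective π := by
    rw [← AlgHom.range_eq_top, eq_top_iff, ← hW, Algebra.adjoin_le_iff]
    intro w hw
    obtain ⟨a, b, ha, hb⟩ := h w hw
    exact ⟨⟨(w, b), 1, a, by rw [pow_one]; exact Prod.ext ha hb⟩, rfl⟩
  let e := AlgEquiv.ofBijective π ⟨hπ, hπ'⟩
  refine ⟨((AlgHom.snd P S D).comp Γ.val).comp e.symm.toAlgHom, fun a ↦ ?_⟩
  have he : e.symm a = ⟨A.val.prod ψ a, 0, a, by rw [pow_zero, one_smul]⟩ :=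
    e.symm_apply_eq.2 rfl
  exact congrArg (fun q : Γ ↦ q.1.2) he

theorem exists_algHom_adjoin_singleton {P S D : Type*} [CommRing P] [IsDomain P]
    [IsIntegrallyClosed P] [CommRing S] [IsDomain S] [Algebra P S] [Module.IsTorsionFree P S]
    [CommRing D] [Algebra P D] {θ : S} (hθ : IsIntegral P θ) {θ' : D}
    (hθ' : aeval θ' (minpoly P θ) = 0) :
    ∃ ψ : Algebra.adjoin P {θ} →ₐ[P] D, ψ ⟨θ, Algebra.self_mem_adjoin_singleton P θ⟩ = θ' := by
  refine ⟨(AdjoinRoot.liftAlgHom (minpoly P θ) (Algebra.ofId P D) θ' hθ').comp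
    (minpoly.equivAdjoin hθ).symm.toAlgHom, ?_⟩
  have hroot : (minpoly.equivAdjoin hθ).symm ⟨θ, Algebra.self_mem_adjoin_singleton P θ⟩ =
      AdjoinRoot.root (minpoly P θ) :=
    (minpoly.equivAdjoin hθ).symm_apply_eq.2 (Subtype.ext (by simp))
  exact (congrArg _ hroot).trans (AdjoinRoot.liftAlgHom_root _ (Algebra.ofId P D) θ' hθ')

theorem exists_algHom_adjoin_of_algHom_quotient {P S D : Type*} [CommRing P] [IsDomain P]
    [IsIntegrallyClosed P] [CommRing S] [IsDomain S] [Algebra P S] [Module.IsTorsionFree P S]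
    [CommRing D] [Algebra P D] (I : Ideal D) [IsAdicComplete I D] {θ : S}
    (hθ : IsIntegral P θ) {g : P} (hgθ : aeval θ (minpoly P θ).derivative ∣ algebraMap P S g)
    {ϖ : D} (hϖ : ϖ ∈ I)
    (χ : S →ₐ[P] D ⧸ Ideal.span {(ϖ * algebraMap P D g) ^ 3}) :
    ∃ ψ : Algebra.adjoin P {θ} →ₐ[P] D, ∀ (a : Algebra.adjoin P {θ}) y,
      χ a = Ideal.Quotient.mk _ y → ϖ ^ 3 * algebraMap P D g ∣ ψ a - y := by
  let J := Ideal.span {(ϖ * algebraMap P D g) ^ 3}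
  have hmem {y z : D} : Ideal.Quotient.mk J y = Ideal.Quotient.mk J z ↔
      (ϖ * algebraMap P D g) ^ 3 ∣ y - z := by
    rw [Ideal.Quotient.mk_eq_mk_iff_sub_mem, Ideal.mem_span_singleton]
  obtain ⟨θ₀, hθ₀⟩ := Ideal.Quotient.mk_surjective (χ θ)
  have hχ (H : P[X]) : Ideal.Quotient.mk J (aeval θ₀ H) = χ (aeval θ H) := by
    rw [← aeval_algHom_apply χ, ← hθ₀]
    exact (aeval_algHom_apply (Ideal.Quotient.mkₐ P J) θ₀ H).symm
  obtain ⟨c, hc⟩ := hgθ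
  obtain ⟨c₀, hc₀⟩ := Ideal.Quotient.mk_surjective (χ c)
  obtain ⟨θ', hroot, hθ'⟩ := exists_isRoot_of_derivative_congr I
    (F := (minpoly P θ).map (algebraMap P D)) (a := θ₀) (c := c₀) (γ := algebraMap P D g) hϖ
    (by
      rw [eval_map_algebraMap, ← sub_zero (aeval θ₀ _), ← hmem, hχ, minpoly.aeval, map_zero,
        map_zero])
    (by
      rw [derivative_map, eval_map_algebraMap, ← hmem, map_mul, hχ, hc₀, ← map_mul,
        mul_comm c _, ← hc]
      exact χ.commutes g)
  obtain ⟨ψ, hψ⟩ :=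
    exists_algHom_adjoin_singleton hθ (by rwa [IsRoot, eval_map_algebraMap] at hroot)
  refine ⟨ψ, fun a y hy ↦ ?_⟩
  obtain ⟨H, hH⟩ := (Algebra.adjoin_singleton_eq_range_aeval P θ).le a.2
  have ha : aeval ⟨θ, Algebra.self_mem_adjoin_singleton P θ⟩ H = a :=
    Subtype.ext ((aeval_algHom_apply (Algebra.adjoin P {θ}).val _ H).symm.trans hH)
  have hψa : ψ a = aeval θ' H := by rw [← ha, ← aeval_algHom_apply, hψ]
  rw [← hH] at hy
  have hy' := hmem.1 ((hχ H).trans hy)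
  have hdvd : ϖ ^ 3 * algebraMap P D g ∣ (ϖ * algebraMap P D g) ^ 3 :=
    ⟨algebraMap P D g ^ 2, by ring⟩
  rw [hψa, ← sub_add_sub_cancel _ (aeval θ₀ H)]
  exact dvd_add (hθ'.trans (by
    simpa only [eval_map_algebraMap] using
      sub_dvd_eval_sub θ' θ₀ (H.map (algebraMap P D)))) (hdvd.trans hy')

theorem exists_algHom_of_algHom_quotient {P S D : Type*} [CommRing P] [IsDomain P]
    [IsIntegrallyClosed P] [CommRing S] [IsDomain S] [Algebra P S] [Module.IsTorsionFree P S]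
    [CommRing D] [IsDomain D] [Algebra P D] (I : Ideal D) [IsAdicComplete I D] {θ : S}
    (hθ : IsIntegral P θ) {g : P} (hgθ : aeval θ (minpoly P θ).derivative ∣ algebraMap P S g)
    {W : Set S} (hW : Algebra.adjoin P W = ⊤) (hgW : ∀ w ∈ W, g • w ∈ Algebra.adjoin P {θ}) {ϖ : D}
    (hϖ : ϖ ∈ I) (hg : algebraMap P D g ≠ 0)
    (χ : S →ₐ[P] D ⧸ Ideal.span {(ϖ * algebraMap P D g) ^ 3}) :
    ∃ Ψ : S →ₐ[P] D, ∀ s y, χ s = Ideal.Quotient.mk _ y → ϖ ^ 3 ∣ Ψ s - y := by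
  obtain ⟨ψ, hψ⟩ := exists_algHom_adjoin_of_algHom_quotient I hθ hgθ hϖ χ
  have hmul {w : S} {y : D} (hw : g • w ∈ Algebra.adjoin P {θ}) (h : χ w = Ideal.Quotient.mk _ y) :
      ∃ z, g • (y + ϖ ^ 3 * z) = ψ ⟨g • w, hw⟩ := by
    have hgy : χ (g • w) = Ideal.Quotient.mk _ (g • y) := by
      rw [map_smul, h]
      rfl
    obtain ⟨z, hz⟩ := hψ ⟨g • w, hw⟩ (g • y) hgy
    refine ⟨z, ((sub_eq_iff_eq_add.1 hz).trans ?_).symm⟩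
    simp only [Algebra.smul_def]
    ring
  obtain ⟨Ψ, hΨψ⟩ := exists_algHom_extending ψ hg hW fun w hw ↦ by
    obtain ⟨y, hy⟩ := Ideal.Quotient.mk_surjective (χ w)
    obtain ⟨z, hz⟩ := hmul (hgW w hw) hy.symm
    exact ⟨⟨g • w, hgW w hw⟩, _, rfl, hz⟩
  have hle : Ideal.span {(ϖ * algebraMap P D g) ^ 3} ≤ Ideal.span {ϖ ^ 3} := by
    rw [Ideal.span_singleton_le_span_singleton, mul_pow]
    exact dvd_mul_right _ _
  have hΨ : (Ideal.Quotient.mkₐ P (Ideal.span {ϖ ^ 3})).comp Ψ =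
      (Ideal.Quotient.factorₐ P hle).comp χ := by
    refine AlgHom.ext_of_adjoin_eq_top hW fun w hw ↦ ?_
    obtain ⟨y, hy⟩ := Ideal.Quotient.mk_surjective (χ w)
    obtain ⟨z, hz⟩ := hmul (hgW w hw) hy.symm
    have hΨw : algebraMap P D g * Ψ w = algebraMap P D g * (y + ϖ ^ 3 * z) := by
      rw [← Algebra.smul_def, ← Algebra.smul_def, hz, ← hΨψ, map_smul]
    rw [AlgHom.comp_apply, AlgHom.comp_apply, mul_left_cancel₀ hg hΨw, ← hy]
    refine Ideal.Quotient.mk_eq_mk_iff_sub_mem .. |>.2 ?_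
    rw [add_sub_cancel_left]
    exact Ideal.mul_mem_right _ _ (Ideal.mem_span_singleton_self _)
  refine ⟨Ψ, fun s y hs ↦ ?_⟩
  have h := DFunLike.congr_fun hΨ s
  rw [AlgHom.comp_apply, AlgHom.comp_apply, hs] at h
  rwa [← Ideal.mem_span_singleton, ← Ideal.Quotient.mk_eq_mk_iff_sub_mem]

end LiftingHoms

section LiftingElements

open Polynomial IsLocalRing
open scoped nonZeroDivisors

section PrimitiveElement

variable {P S : Type*} (k E : Type*) [CommRing P] [CommRing S] [Algebra P S]
  [Field k] [Algebra P k] [IsFractionRing P k] [Field E] [Algebra S E] [Algebra P E]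
  [IsScalarTower P S E] [Algebra k E] [IsScalarTower P k E]

theorem aeval_derivative_minpoly_ne_zero [IsDomain P] [IsDomain S] [IsIntegrallyClosed P]
    [Algebra.IsSeparable k E] {θ : S} (hθ : IsIntegral P θ) :
    aeval θ (minpoly P θ).derivative ≠ 0 := by
  have h := (Algebra.IsSeparable.isSeparable k (algebraMap S E θ)).aeval_derivative_ne_zero
    (minpoly.aeval k (algebraMap S E θ))
  rw [minpoly.isIntegrallyClosed_eq_field_fractions k E hθ, derivative_map, aeval_map_algebraMap,
    aeval_algebraMap_apply] at h
  exact fun h0 ↦ h (by rw [h0, map_zero])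

variable [IsFractionRing S E]

theorem finiteDimensional_of_isFractionRing [IsDomain P] [IsDomain S] [Algebra.IsAlgebraic P S]
    [Algebra.FiniteType P S] : FiniteDimensional k E := by
  have : Algebra.IsAlgebraic S E := IsLocalization.isAlgebraic E S⁰
  have : Algebra.IsAlgebraic P E := Algebra.IsAlgebraic.trans P S E
  have : Algebra.IsAlgebraic k E := IsFractionRing.comap_isAlgebraic_iff (A := P).1 inferInstance
  have : Algebra.EssFiniteType S E := .of_isLocalization _ S⁰
  have : Algebra.EssFiniteType P E := .comp P S E
  have : Algebra.EssFiniteType k E := .of_comp P k E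
  exact Algebra.finite_of_essFiniteType_of_isAlgebraic

theorem exists_isIntegral_adjoin_algebraMap_eq_top [IsDomain P] [CharZero P] [IsDomain S]
    [FaithfulSMul P S] [Algebra.IsAlgebraic P S] [Algebra.FiniteType P S] :
    ∃ θ : S, IsIntegral P θ ∧ Algebra.adjoin k {algebraMap S E θ} = ⊤ := by
  have : FiniteDimensional k E := finiteDimensional_of_isFractionRing (P := P) (S := S) k E
  have : CharZero k := charZero_of_injective_algebraMap (IsFractionRing.injective P k)
  obtain ⟨α, hα⟩ := Field.exists_primitive_element k E
  obtain ⟨⟨s, q⟩, hsq⟩ := IsLocalization.surj (Algebra.algebraMapSubmonoid S P⁰) α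
  obtain ⟨p, hp, hpq⟩ := q.2
  obtain ⟨y, hy, hint⟩ := (Algebra.IsAlgebraic.isAlgebraic (R := P) s).exists_integral_multiple
  refine ⟨y • s, hint, ?_⟩
  rw [← IntermediateField.adjoin_eq_top_iff, eq_top_iff, ← hα, IntermediateField.adjoin_le_iff,
    Set.singleton_subset_iff]
  have hyp : algebraMap k E (algebraMap P k (y * p)) ≠ 0 := by
    rw [Ne, map_eq_zero, map_eq_zero_iff _ (IsFractionRing.injective P k)]
    exact mul_ne_zero hy (nonZeroDivisors.ne_zero hp)
  have hθ : algebraMap S E (y • s) = algebraMap k E (algebraMap P k (y * p)) * α := by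
    rw [Algebra.smul_def, map_mul, ← hsq, ← hpq, ← IsScalarTower.algebraMap_apply P k,
      IsScalarTower.algebraMap_apply P S E, map_mul, map_mul]
    ring
  rw [← inv_mul_cancel_left₀ hyp α, ← hθ]
  exact mul_mem (inv_mem (IntermediateField.algebraMap_mem _ _))
    (IntermediateField.mem_adjoin_simple_self _ _)

variable {k E}

theorem exists_smul_mem_adjoin_of_adjoin_algebraMap_eq_top {θ : S}
    (hθ : Algebra.adjoin k {algebraMap S E θ} = ⊤) (s : S) :
    ∃ g ∈ P⁰, g • s ∈ Algebra.adjoin P {θ} := by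
  obtain ⟨g, hg⟩ := multiple_mem_adjoin_of_mem_localization_adjoin P⁰ (R' := k) {algebraMap S E θ}
    (algebraMap S E s) (hθ ▸ Algebra.mem_top)
  refine ⟨g, g.2, ?_⟩
  have hmap : (Algebra.adjoin P {θ}).map (IsScalarTower.toAlgHom P S E) =
      Algebra.adjoin P {algebraMap S E θ} := by
    rw [AlgHom.map_adjoin, Set.image_singleton, IsScalarTower.coe_toAlgHom']
  rw [← hmap] at hg
  obtain ⟨a, ha, hag⟩ := hg
  have hsmul : algebraMap S E a = algebraMap S E (g.1 • s) :=
    hag.trans (map_smul (IsScalarTower.toAlgHom P S E) g.1 s).symm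
  rwa [← IsFractionRing.injective S E hsmul]

end PrimitiveElement

theorem exists_forall_smul_mem_of_finite {P S : Type*} [CommRing P] [CommRing S] [Algebra P S]
    {M : Submonoid P} {A : Subalgebra P S} {W : Finset S}
    (h : ∀ w ∈ W, ∃ g ∈ M, g • w ∈ A) : ∃ g ∈ M, ∀ w ∈ W, g • w ∈ A := by
  classical
  choose! g hgM hg using h
  refine ⟨∏ w ∈ W, g w, prod_mem hgM, fun w hw ↦ ?_⟩
  rw [← Finset.prod_erase_mul _ _ hw, mul_smul]
  exact A.smul_mem (hg w hw) _

theorem exists_isIntegral_forall_smul_mem_adjoin {P S : Type*} [CommRing P] [IsDomain P]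
    [IsIntegrallyClosed P] [CharZero P] [CommRing S] [IsDomain S] [Algebra P S] [FaithfulSMul P S]
    [Algebra.IsAlgebraic P S] [Algebra.FiniteType P S] {f : S} (hf : f ≠ 0) :
    ∃ (θ : S) (g : P) (W : Finset S), IsIntegral P θ ∧ g ≠ 0 ∧ f ∣ algebraMap P S g ∧
      aeval θ (minpoly P θ).derivative ∣ algebraMap P S g ∧
      Algebra.adjoin P (W : Set S) = ⊤ ∧ ∀ w ∈ W, g • w ∈ Algebra.adjoin P {θ} := by
  let k := FractionRing P
  let E := FractionRing S
  have : FaithfulSMul P E := .trans P S E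
  let _ : Algebra k E := FractionRing.liftAlgebra P E
  have : IsScalarTower P k E := FractionRing.isScalarTower_liftAlgebra P E
  have : CharZero k := charZero_of_injective_algebraMap (IsFractionRing.injective P k)
  have : FiniteDimensional k E := finiteDimensional_of_isFractionRing (P := P) (S := S) k E
  obtain ⟨θ, hθ, htop⟩ := exists_isIntegral_adjoin_algebraMap_eq_top (P := P) (S := S) k E
  obtain ⟨W, hW⟩ := (inferInstance : Algebra.FiniteType P S).out
  obtain ⟨g, hg, hgW⟩ := exists_forall_smul_mem_of_finite (W := W) fun w _ ↦
    exists_smul_mem_adjoin_of_adjoin_algebraMap_eq_top (P := P) htop w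
  have hδ : f * aeval θ (minpoly P θ).derivative ≠ 0 :=
    mul_ne_zero hf (aeval_derivative_minpoly_ne_zero k E hθ)
  obtain ⟨e, he, hfe⟩ := (Algebra.IsAlgebraic.isAlgebraic (R := P) _).exists_nonzero_dvd
    (mem_nonZeroDivisors_of_ne_zero hδ)
  have hdvd : f * aeval θ (minpoly P θ).derivative ∣ algebraMap P S (e * g) := by
    rw [map_mul]
    exact hfe.mul_right _
  refine ⟨θ, e * g, W, hθ, mul_ne_zero he (nonZeroDivisors.ne_zero hg), dvd_of_mul_right_dvd hdvd,
    dvd_of_mul_left_dvd hdvd, hW, fun w hw ↦ ?_⟩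
  rw [mul_smul]
  exact Subalgebra.smul_mem _ (hgW w hw) _

/-- An element `g` of `S` such that every ring homomorphism `χ` from `S` to a quotient
`D ⧸ ((ϖ γ) ^ 3)` of a complete local domain, where `γ` represents `χ g`, agrees modulo `ϖ ^ 3`
with a homomorphism `S → D` not killing `g`. It plays the role of a discriminant. -/
def IsLiftingElement {S : Type u} [CommRing S] (g : S) : Prop :=
  ∀ {D : Type u} [CommRing D] [IsDomain D] [IsLocalRing D] [IsAdicComplete (maximalIdeal D) D]
    {ϖ γ : D} (_ : ϖ ∈ maximalIdeal D) (_ : γ ≠ 0) (χ : S →+* D ⧸ Ideal.span {(ϖ * γ) ^ 3})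
    (_ : χ g = Ideal.Quotient.mk _ γ),
    ∃ Ψ : S →+* D, Ψ g ≠ 0 ∧ ∀ s y, χ s = Ideal.Quotient.mk _ y → ϖ ^ 3 ∣ Ψ s - y

theorem associated_of_sub_mem_span_mul_pow {D : Type*} [CommRing D] [IsLocalRing D] {ϖ γ δ : D}
    {n : ℕ} (hϖ : ϖ ∈ maximalIdeal D) (hn : n ≠ 0) (h : δ - γ ∈ Ideal.span {(ϖ * γ) ^ n}) :
    Associated γ δ := by
  obtain ⟨c, hc⟩ := Ideal.mem_span_singleton.1 h
  obtain ⟨m, rfl⟩ := Nat.exists_eq_succ_of_ne_zero hn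
  have hu : IsUnit (1 + ϖ * ((ϖ * γ) ^ m * c)) := by
    by_contra hu
    exact (Ideal.ne_top_iff_one _).1 (maximalIdeal.isMaximal D).ne_top
      ((add_mem_cancel_right (Ideal.mul_mem_right _ _ hϖ)).1 ((mem_maximalIdeal _).2 hu))
  refine ⟨hu.unit, ?_⟩
  rw [IsUnit.unit_spec]
  rw [pow_succ'] at hc
  linear_combination -hc

theorem isLiftingElement_algebraMap {σ : Type*} {S : Type u} [CommRing S] [IsDomain S]
    [Algebra (MvPolynomial σ ℤ) S] [FaithfulSMul (MvPolynomial σ ℤ) S] {θ : S}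
    (hθ : IsIntegral (MvPolynomial σ ℤ) θ) {g : MvPolynomial σ ℤ}
    (hgθ : aeval θ (minpoly (MvPolynomial σ ℤ) θ).derivative ∣ algebraMap _ S g)
    {W : Set S} (hW : Algebra.adjoin (MvPolynomial σ ℤ) W = ⊤)
    (hgW : ∀ w ∈ W, g • w ∈ Algebra.adjoin (MvPolynomial σ ℤ) {θ}) :
    IsLiftingElement (algebraMap _ S g) := by
  intro D _ _ _ _ ϖ γ hϖ hγ χ hχ
  choose z hz using fun i ↦
    Ideal.Quotient.mk_surjective (χ (algebraMap (MvPolynomial σ ℤ) S (.X i)))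
  let _ : Algebra (MvPolynomial σ ℤ) D := (MvPolynomial.aeval z).toRingHom.toAlgebra
  have hcomp (p : MvPolynomial σ ℤ) :
      χ (algebraMap _ S p) = Ideal.Quotient.mk _ (algebraMap _ D p) := by
    have h : χ.comp (algebraMap _ S) = (Ideal.Quotient.mk _).comp (algebraMap _ D) :=
      MvPolynomial.ringHom_ext (by simp) fun i ↦
        (hz i).symm.trans (congrArg _ (MvPolynomial.aeval_X z i).symm)
    exact DFunLike.congr_fun h p
  have hassoc : Associated γ (algebraMap _ D g) :=
    associated_of_sub_mem_span_mul_pow hϖ three_ne_zero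
      ((Ideal.Quotient.mk_eq_mk_iff_sub_mem _ _).1 ((hcomp g).symm.trans hχ))
  have hspan : Ideal.span {(ϖ * γ) ^ 3} = Ideal.span {(ϖ * algebraMap _ D g) ^ 3} :=
    Ideal.span_singleton_eq_span_singleton.2 ((hassoc.mul_left ϖ).pow_pow)
  have hg : algebraMap _ D g ≠ 0 := hassoc.ne_zero_iff.1 hγ
  let ε := (Ideal.quotEquivOfEq hspan).toRingHom
  obtain ⟨Ψ, hΨ⟩ := exists_algHom_of_algHom_quotient (maximalIdeal D) hθ hgθ hW hgW hϖ hg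
    { ε.comp χ with commutes' := fun p ↦ congrArg ε (hcomp p) }
  refine ⟨Ψ, ?_, fun s y h ↦ hΨ s y (congrArg ε h)⟩
  rwa [RingHom.coe_coe, Ψ.commutes]

theorem exists_dvd_isLiftingElement {S : Type u} [CommRing S] [IsDomain S] [CharZero S]
    [Algebra.FiniteType ℤ S] {f : S} (hf : f ≠ 0) :
    ∃ g, f ∣ g ∧ g ≠ 0 ∧ IsLiftingElement g := by
  obtain ⟨t, ht⟩ := exists_isTranscendenceBasis ℤ S
  let P := MvPolynomial t ℤ
  let _ : Algebra P S := (MvPolynomial.aeval ((↑) : t → S)).toRingHom.toAlgebra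
  have hinj : Function.Injective (algebraMap P S) := ht.1
  have : FaithfulSMul P S := (faithfulSMul_iff_algebraMap_injective P S).2 hinj
  have : Algebra.IsAlgebraic P S :=
    have := ht.isAlgebraic
    .of_ringHom_of_comp_eq ht.1.aevalEquiv.toRingEquiv.toRingHom (RingHom.id S)
      ht.1.aevalEquiv.surjective Function.injective_id rfl
  have : Algebra.FiniteType P S := .of_restrictScalars_finiteType ℤ P S
  obtain ⟨θ, g, W, hθ, hg, hfg, hgθ, hW, hgW⟩ :=
    exists_isIntegral_forall_smul_mem_adjoin (P := P) hf
  exact ⟨algebraMap P S g, hfg, (map_ne_zero_iff _ hinj).2 hg,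
    isLiftingElement_algebraMap hθ hgθ hW hgW⟩

end LiftingElements

section PowerSeriesRings

variable {k : Type*} {d : ℕ}

theorem mem_span_range_X_of_constantCoeff_eq_zero [CommRing k] {f : MvPowerSeries (Fin d) k}
    (hf : MvPowerSeries.constantCoeff f = 0) :
    f ∈ Ideal.span (Set.range (MvPowerSeries.X : Fin d → MvPowerSeries (Fin d) k)) := by
  induction d with
  | zero =>
    have hf0 : f = 0 := by
      ext m
      rw [Subsingleton.elim m 0, MvPowerSeries.coeff_zero_eq_constantCoeff_apply, hf, map_zero]
    exact hf0 ▸ zero_mem _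
  | succ d ih =>
    let e := MvPowerSeries.finSuccEquiv k d
    have hconst : PowerSeries.constantCoeff (e f) ∈
        Ideal.span (Set.range MvPowerSeries.X) := ih <| by
      rw [← PowerSeries.coeff_zero_eq_constantCoeff_apply,
        ← MvPowerSeries.coeff_zero_eq_constantCoeff_apply, MvPowerSeries.coeff_coeff_finSuccEquiv,
        Finsupp.cons_zero_zero, MvPowerSeries.coeff_zero_eq_constantCoeff_apply, hf]
    have hmap : (Ideal.span (Set.range (MvPowerSeries.X : Fin d → MvPowerSeries (Fin d) k))).map
        (e.symm.toRingEquiv.toRingHom.comp PowerSeries.C) ≤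
          Ideal.span (Set.range MvPowerSeries.X) := by
      rw [Ideal.map_span, Ideal.span_le]
      rintro _ ⟨_, ⟨i, rfl⟩, rfl⟩
      refine Ideal.subset_span ⟨i.succ, (e.symm_apply_eq.2 ?_).symm⟩
      exact (MvPowerSeries.finSuccEquiv_X_succ ..).symm
    have hX : e.symm PowerSeries.X = MvPowerSeries.X 0 :=
      e.symm_apply_eq.2 (MvPowerSeries.finSuccEquiv_X_zero ..).symm
    rw [← e.symm_apply_apply f, PowerSeries.eq_shift_mul_X_add_const (e f), map_add, map_mul, hX]
    exact add_mem (Ideal.mul_mem_left _ _ (Ideal.subset_span ⟨0, rfl⟩))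
      (hmap (Ideal.mem_map_of_mem _ hconst))

theorem maximalIdeal_mvPowerSeries [Field k] :
    IsLocalRing.maximalIdeal (MvPowerSeries (Fin d) k) =
      Ideal.span (Set.range MvPowerSeries.X) := by
  apply le_antisymm
  · intro f hf
    refine mem_span_range_X_of_constantCoeff_eq_zero (by_contra fun h => hf ?_)
    exact MvPowerSeries.isUnit_iff_constantCoeff.2 (isUnit_iff_ne_zero.2 h)
  · rw [Ideal.span_le]
    rintro _ ⟨i, rfl⟩ hunit
    rw [MvPowerSeries.isUnit_iff_constantCoeff, MvPowerSeries.constantCoeff_X] at hunit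
    exact not_isUnit_zero hunit

instance isAdicComplete_mvPowerSeries [Field k] :
    IsAdicComplete (IsLocalRing.maximalIdeal (MvPowerSeries (Fin d) k))
      (MvPowerSeries (Fin d) k) := by
  rw [maximalIdeal_mvPowerSeries]
  infer_instance

/-- The form of degree `N` occurring in the power series `G`. -/
noncomputable def formOfDegree [CommRing k] (N : ℕ) (G : MvPowerSeries (Fin d) k) :
    MvPolynomial (Fin d) k :=
  MvPolynomial.homogeneousComponent N (MvPowerSeries.truncTotal (N + 1) G)

theorem coeff_formOfDegree [CommRing k] (N : ℕ) (G : MvPowerSeries (Fin d) k) (m : Fin d →₀ ℕ) :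
    (formOfDegree N G).coeff m = if m.degree = N then MvPowerSeries.coeff m G else 0 := by
  rw [formOfDegree, MvPolynomial.coeff_homogeneousComponent]
  split_ifs with h
  · exact MvPowerSeries.coeff_truncTotal _ (by omega)
  · rfl

theorem exists_formOfDegree_ne_zero [CommRing k] {G : MvPowerSeries (Fin d) k} (hG : G ≠ 0) :
    ∃ N, formOfDegree N G ≠ 0 := by
  obtain ⟨m, hm⟩ := (MvPowerSeries.ne_zero_iff_exists_coeff_ne_zero G).1 hG
  refine ⟨m.degree, fun h => hm ?_⟩
  simpa only [coeff_formOfDegree, if_true, MvPolynomial.coeff_zero] using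
    congr_arg (MvPolynomial.coeff m) h

theorem constantCoeff_coeff_finSuccEquiv_subst [CommRing k]
    {a : Fin (d + 1) → MvPowerSeries (Fin (d + 1)) k} (ha : MvPowerSeries.HasSubst a)
    {α : Fin (d + 1) → k}
    (hα : ∀ i, PowerSeries.map MvPowerSeries.constantCoeff (MvPowerSeries.finSuccEquiv k d (a i)) =
      PowerSeries.C (α i) * PowerSeries.X)
    (G : MvPowerSeries (Fin (d + 1)) k) (N : ℕ) :
    MvPowerSeries.constantCoeff
        (PowerSeries.coeff N (MvPowerSeries.finSuccEquiv k d (MvPowerSeries.subst a G))) =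
      MvPolynomial.eval α (formOfDegree N G) := by
  let ev := (PowerSeries.map (MvPowerSeries.constantCoeff (R := k))).comp
    (MvPowerSeries.finSuccEquiv k d).toRingEquiv.toRingHom
  have coeff_ev : ∀ g, PowerSeries.coeff N (ev g) =
      MvPowerSeries.coeff ((0 : Fin d →₀ ℕ).cons N) g := fun _ =>
    MvPowerSeries.coeff_coeff_finSuccEquiv _
  have ev_prod : ∀ m : Fin (d + 1) →₀ ℕ, PowerSeries.coeff N (ev (m.prod fun i e => a i ^ e)) =
      if m.degree = N then m.prod fun i e => α i ^ e else 0 := fun m => by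
    have hterm : ev (m.prod fun i e => a i ^ e) =
        PowerSeries.C (m.prod fun i e => α i ^ e) * PowerSeries.X ^ m.degree := by
      simp only [Finsupp.prod, Finsupp.degree_apply, map_prod, map_pow,
        ← Finset.prod_pow_eq_pow_sum, ← Finset.prod_mul_distrib, ← mul_pow]
      exact Finset.prod_congr rfl fun i _ => congr_arg (· ^ m i) (hα i)
    rw [hterm, PowerSeries.coeff_C_mul, PowerSeries.coeff_X_pow, mul_ite, mul_one, mul_zero]
    simp only [eq_comm]
  change PowerSeries.coeff N (ev _) = _
  rw [coeff_ev, MvPowerSeries.coeff_subst ha, MvPolynomial.eval_eq,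
    finsum_eq_sum_of_support_subset (s := (formOfDegree N G).support)]
  · refine Finset.sum_congr rfl fun m _ => ?_
    rw [← coeff_ev, ev_prod, coeff_formOfDegree]
    split_ifs <;> simp [Finsupp.prod]
  · intro m hm
    rw [Function.mem_support, ← coeff_ev, ev_prod] at hm
    rw [Finset.mem_coe, MvPolynomial.mem_support_iff, coeff_formOfDegree]
    split_ifs at hm ⊢ with h
    · exact left_ne_zero_of_smul hm
    · exact (hm (smul_zero _)).elim

theorem eval_mul_of_isHomogeneous {σ : Type*} [CommRing k] {q : MvPolynomial σ k} {N : ℕ}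
    (hq : q.IsHomogeneous N) (r : k) (v : σ → k) :
    MvPolynomial.eval (fun i => r * v i) q = r ^ N * MvPolynomial.eval v q := by
  rw [MvPolynomial.eval_eq, MvPolynomial.eval_eq, Finset.mul_sum]
  refine Finset.sum_congr rfl fun m hm => ?_
  have hdeg : ∑ i ∈ m.support, m i = N := by
    rw [← Finsupp.degree_apply, Finsupp.degree_eq_weight_one]
    exact hq (MvPolynomial.mem_support_iff.1 hm)
  simp only [mul_pow, Finset.prod_mul_distrib, Finset.prod_pow_eq_pow_sum, hdeg]
  ring

theorem exists_int_eval_cons_one_ne_zero [Field k] [CharZero k] {N : ℕ}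
    {q : MvPolynomial (Fin (d + 1)) k} (hq : q.IsHomogeneous N) (hq0 : q ≠ 0) :
    ∃ c : Fin d → ℤ, MvPolynomial.eval (Fin.cons 1 fun i => (c i : k)) q ≠ 0 := by
  -- A point with first coordinate `1 / n` and the others integral scales to one of the
  -- required form.
  let s : Fin (d + 1) → Set k :=
    Fin.cons (Set.range fun n : ℕ => ((n + 1 : ℕ) : k)⁻¹) fun _ => Set.range (Int.cast : ℤ → k)
  have hs : ∀ i, (s i).Infinite := Fin.cases
    (Set.infinite_range_of_injective fun m n h => by
      simpa only [inv_inj, Nat.cast_inj, add_left_inj] using h)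
    fun _ => Set.infinite_range_of_injective Int.cast_injective
  obtain ⟨v, hv, hqv⟩ : ∃ v ∈ Set.pi .univ s, MvPolynomial.eval v q ≠ 0 := by
    by_contra! h
    exact hq0 (MvPolynomial.funext_set s hs fun v hv => (h v hv).trans (map_zero _).symm)
  obtain ⟨n, hn⟩ : v 0 ∈ Set.range fun n : ℕ => ((n + 1 : ℕ) : k)⁻¹ := hv 0 trivial
  have hvs : ∀ i : Fin d, v i.succ ∈ Set.range (Int.cast : ℤ → k) := fun i => hv i.succ trivial
  choose c hc using hvs
  have hn0 : ((n + 1 : ℕ) : k) ≠ 0 := Nat.cast_ne_zero.2 n.succ_ne_zero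
  refine ⟨fun i => (n + 1 : ℕ) * c i, ?_⟩
  have hscale : (Fin.cons 1 fun i => (((n + 1 : ℕ) * c i : ℤ) : k) : Fin (d + 1) → k) =
      fun i => ((n + 1 : ℕ) : k) * v i := by
    refine funext (Fin.cases ?_ fun i => ?_)
    · rw [Fin.cons_zero, ← hn, mul_inv_cancel₀ hn0]
    · rw [Fin.cons_succ, ← hc, Int.cast_mul, Int.cast_natCast]
  rw [hscale, eval_mul_of_isHomogeneous hq]
  exact mul_ne_zero (pow_ne_zero _ hn0) hqv

theorem exists_ringHom_isUnit_coeff [Field k] [CharZero k] {G : MvPowerSeries (Fin (d + 1)) k}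
    (hG : G ≠ 0) :
    ∃ (c : Fin d → ℤ) (L : MvPowerSeries (Fin (d + 1)) k →+* PowerSeries (MvPowerSeries (Fin d) k)),
      L (MvPowerSeries.X 0) = PowerSeries.X ∧
      (∀ i : Fin d, L (.X i.succ - (c i : MvPowerSeries (Fin (d + 1)) k) * .X 0) =
        PowerSeries.C (MvPowerSeries.X i)) ∧
      ∃ N, IsUnit (PowerSeries.coeff N (L G)) := by
  obtain ⟨N, hN⟩ := exists_formOfDegree_ne_zero hG
  obtain ⟨c, hc⟩ := exists_int_eval_cons_one_ne_zero
    (MvPolynomial.homogeneousComponent_isHomogeneous _ _) hN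
  let a : Fin (d + 1) → MvPowerSeries (Fin (d + 1)) k :=
    Fin.cons (.X 0) fun i => .X i.succ + c i * .X 0
  have ha : MvPowerSeries.HasSubst a := MvPowerSeries.hasSubst_of_constantCoeff_zero <|
    Fin.cases (by simp [a]) fun i => by simp [a]
  let e := MvPowerSeries.finSuccEquiv k d
  let L := e.toRingEquiv.toRingHom.comp (MvPowerSeries.substAlgHom (R := k) ha).toRingHom
  have hLX : ∀ i, L (.X i) = e (a i) := fun i => congr_arg e (MvPowerSeries.substAlgHom_X ha i)
  have hL0 : L (.X 0) = PowerSeries.X := (hLX 0).trans (MvPowerSeries.finSuccEquiv_X_zero ..)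
  refine ⟨c, L, hL0, fun i => ?_, N, ?_⟩
  · rw [map_sub, map_mul, hL0, hLX]
    simp [e, a, MvPowerSeries.finSuccEquiv_X_zero, MvPowerSeries.finSuccEquiv_X_succ]
  · rw [MvPowerSeries.isUnit_iff_constantCoeff, isUnit_iff_ne_zero]
    change MvPowerSeries.constantCoeff
      (PowerSeries.coeff N (e (MvPowerSeries.substAlgHom ha G))) ≠ 0
    rw [MvPowerSeries.coe_substAlgHom, constantCoeff_coeff_finSuccEquiv_subst ha]
    · exact hc
    · refine Fin.cases ?_ fun i => ?_
      · simp [a, MvPowerSeries.finSuccEquiv_X_zero]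
      · simp [a, MvPowerSeries.finSuccEquiv_X_zero, MvPowerSeries.finSuccEquiv_X_succ]

end PowerSeriesRings

section WeierstrassModels

open IsLocalRing Polynomial

variable {A : Type*} {B : Type*} {S : Type*} [CommRing A] [CommRing B] [CommRing S] {d : ℕ}
  {x : Fin d → A} {s : Fin (d + 1) → S} {g : S}

/-- A first-order approximation, over `A`, of a homomorphism from `S` to a power series ring in one
variable `X`: it sends `s` to `(X, x)` and `g` to a monic polynomial `R` up to a unit, modulo
`(X * R) ^ 3`. In contrast to a homomorphism to `A⟦X⟧` it only involves finitely many elements of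
`A` when `S` is finitely generated. -/
def HasWeierstrassModel (x : Fin d → A) (s : Fin (d + 1) → S) (g : S) : Prop :=
  ∃ (R : A[X]) (χ : S →+* AdjoinRoot ((X * R) ^ 3)), R.Monic ∧
    χ (s 0) = AdjoinRoot.mk _ X ∧ (∀ i, χ (s i.succ) = AdjoinRoot.mk _ (C (x i))) ∧
    Associated (AdjoinRoot.mk _ R) (χ g)

theorem adjoinRoot_map_mk (φ : A →+* B) {P : A[X]} {Q : B[X]} (h : Q ∣ P.map φ) (p : A[X]) :
    AdjoinRoot.map φ P Q h (AdjoinRoot.mk P p) = AdjoinRoot.mk Q (p.map φ) := by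
  induction p using Polynomial.induction_on' with
  | add p q hp hq => rw [map_add, map_add, hp, hq, Polynomial.map_add, map_add]
  | monomial n a => simp [← C_mul_X_pow_eq_monomial]

theorem adjoinRoot_map_injective {φ : A →+* B} (hφ : Function.Injective φ) {P : A[X]}
    (hP : P.Monic) {Q : B[X]} (hQ : P.map φ = Q) :
    Function.Injective (AdjoinRoot.map φ P Q hQ.symm.dvd) := by
  subst hQ
  rw [injective_iff_map_eq_zero]
  intro y hy
  obtain ⟨p, rfl⟩ := AdjoinRoot.mk_surjective y
  rwa [adjoinRoot_map_mk, AdjoinRoot.mk_eq_zero, map_dvd_map φ hφ hP, ← AdjoinRoot.mk_eq_zero] at hy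

theorem exists_comp_eq_of_range_le {T : Type*} [CommRing T] {ι : A →+* B}
    (hι : Function.Injective ι) {χ : T →+* B} (h : χ.range ≤ ι.range) :
    ∃ χ₀ : T →+* A, ι.comp χ₀ = χ := by
  let e := RingEquiv.ofBijective ι.rangeRestrict
    ⟨fun a b hab => hι (congr_arg Subtype.val hab), ι.rangeRestrict_surjective⟩
  refine ⟨e.symm.toRingHom.comp (χ.codRestrict ι.range fun t => h ⟨t, rfl⟩),
    RingHom.ext fun t => ?_⟩
  exact congr_arg Subtype.val (e.apply_symm_apply _)

theorem exists_finiteType_subalgebra_map_eq (W : Set A) (hW : W.Finite) (Q : Set A[X])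
    (hQ : Q.Finite) :
    ∃ A₀ : Subalgebra ℤ A, Algebra.FiniteType ℤ A₀ ∧ W ⊆ A₀ ∧
      Q ⊆ Set.range (Polynomial.map (A₀.val : A₀ →+* A)) := by
  let T : Set A := W ∪ ⋃ q ∈ Q, (q.coeffs : Set A)
  have hT : T.Finite := hW.union (hQ.biUnion fun q _ => Finset.finite_toSet _)
  refine ⟨Algebra.adjoin ℤ T, ?_, Set.subset_union_left.trans Algebra.subset_adjoin, fun q hq => ?_⟩
  · exact (Subalgebra.fg_iff_finiteType _).1 (Subalgebra.fg_def.2 ⟨T, hT, rfl⟩)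
  · refine (mem_lifts q).1 ((lifts_iff_coeff_lifts q).2 fun n => ?_)
    by_cases h0 : q.coeff n = 0
    · exact ⟨0, by rw [h0, map_zero]⟩
    · exact ⟨⟨q.coeff n, Algebra.subset_adjoin
        (.inr (Set.mem_biUnion hq (coeff_mem_coeffs h0)))⟩, rfl⟩

theorem HasWeierstrassModel.map (H : HasWeierstrassModel x s g) (φ : A →+* B) :
    HasWeierstrassModel (φ ∘ x) s g := by
  obtain ⟨R, χ, hR, h0, hs, hg⟩ := H
  let φ' := AdjoinRoot.map φ ((X * R) ^ 3) ((X * R.map φ) ^ 3)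
    (by rw [Polynomial.map_pow, Polynomial.map_mul, map_X])
  refine ⟨R.map φ, φ'.comp χ, hR.map φ, ?_, fun i => ?_, ?_⟩
  · rw [RingHom.comp_apply, h0, adjoinRoot_map_mk, map_X]
  · rw [RingHom.comp_apply, hs, adjoinRoot_map_mk, map_C, Function.comp_apply]
  · rw [RingHom.comp_apply, ← adjoinRoot_map_mk]
    exact hg.map φ'

theorem exists_finiteType_subalgebra_adjoinRoot {R : A[X]} (hR : R.Monic) {W : Set A}
    (hW : W.Finite) {Q : Set (AdjoinRoot ((X * R) ^ 3))} (hQ : Q.Finite) :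
    ∃ (A₀ : Subalgebra ℤ A) (R₀ : A₀[X])
      (ι : AdjoinRoot ((X * R₀) ^ 3) →+* AdjoinRoot ((X * R) ^ 3)),
      Algebra.FiniteType ℤ A₀ ∧ W ⊆ A₀ ∧ R₀.Monic ∧ R₀.map A₀.val.toRingHom = R ∧
      Function.Injective ι ∧
      (∀ q, ι (AdjoinRoot.mk _ q) = AdjoinRoot.mk _ (q.map A₀.val.toRingHom)) ∧
      Q ⊆ Set.range ι := by
  choose p hp using AdjoinRoot.mk_surjective (g := (X * R) ^ 3)
  obtain ⟨A₀, hA₀, hWA₀, hQA₀⟩ := exists_finiteType_subalgebra_map_eq W hW ({R} ∪ p '' Q)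
    ((Set.finite_singleton R).union (hQ.image p))
  rw [Set.union_subset_iff, Set.singleton_subset_iff, Set.image_subset_iff] at hQA₀
  obtain ⟨⟨R₀, rfl⟩, hpQ⟩ := hQA₀
  let φ : A₀ →+* A := A₀.val
  have hφ : Function.Injective φ := Subtype.val_injective
  have hR₀ : R₀.Monic := monic_of_injective hφ hR
  have hXR : ((X * R₀) ^ 3).map φ = (X * R₀.map φ) ^ 3 := by
    rw [Polynomial.map_pow, Polynomial.map_mul, map_X]
  refine ⟨A₀, R₀, AdjoinRoot.map φ _ _ hXR.symm.dvd, hA₀, hWA₀, hR₀, rfl,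
    adjoinRoot_map_injective hφ ((monic_X.mul hR₀).pow 3) hXR, adjoinRoot_map_mk φ _,
    fun y hy => ?_⟩
  obtain ⟨q, hq⟩ := hpQ hy
  exact ⟨AdjoinRoot.mk _ q, by rw [adjoinRoot_map_mk, hq, hp]⟩

theorem HasWeierstrassModel.exists_finiteType_subring [Algebra.FiniteType ℤ S]
    (H : HasWeierstrassModel x s g) :
    ∃ (A₀ : Subring A) (x₀ : Fin d → A₀), Algebra.FiniteType ℤ A₀ ∧ (∀ i, (x₀ i : A) = x i) ∧
      HasWeierstrassModel x₀ s g := by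
  obtain ⟨R, χ, hR, h0, hs, u, hu⟩ := H
  obtain ⟨w, hw⟩ := Algebra.FiniteType.out (R := ℤ) (A := S)
  obtain ⟨A₀, R₀, ι, hA₀, hxA₀, hR₀, rfl, hι, hιmk, hQ⟩ := exists_finiteType_subalgebra_adjoinRoot
    hR (Set.finite_range x) ((Set.toFinite {u.1, u.2}).union (w.finite_toSet.image χ))
  rw [Set.union_subset_iff, Set.image_subset_iff] at hQ
  obtain ⟨hu', hχ⟩ := hQ
  obtain ⟨χ₀, rfl⟩ := exists_comp_eq_of_range_le hι (χ := χ) <| by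
    have hadj : Algebra.adjoin ℤ (w : Set S) ≤ (subalgebraOfSubring ι.range).comap χ.toIntAlgHom :=
      Algebra.adjoin_le hχ
    rw [hw] at hadj
    rintro _ ⟨t, rfl⟩
    exact hadj (show t ∈ ⊤ from trivial)
  obtain ⟨v, hv⟩ := hu' (.inl rfl)
  obtain ⟨v', hv'⟩ := hu' (.inr rfl)
  have hvv' : v * v' = 1 := hι <| by
    rw [map_mul, hv, hv', map_one]
    exact u.val_inv
  refine ⟨A₀.toSubring, fun i => ⟨x i, hxA₀ ⟨i, rfl⟩⟩, hA₀, fun _ => rfl, R₀, χ₀, hR₀, hι ?_,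
    fun i => hι ?_, .mkOfMulEqOne v v' hvv', hι ?_⟩
  · rw [hιmk, map_X, ← h0, RingHom.comp_apply]
  · rw [hιmk, map_C, ← RingHom.comp_apply, hs]
    rfl
  · rw [Units.val_mkOfMulEqOne, map_mul, hιmk, hv, hu, RingHom.comp_apply]

theorem hasWeierstrassModel_of_ringHom [IsLocalRing A] [IsAdicComplete (maximalIdeal A) A]
    (L : S →+* PowerSeries A) (h0 : L (s 0) = PowerSeries.X)
    (hs : ∀ i, L (s i.succ) = PowerSeries.C (x i))
    (hg : ∃ N, IsUnit (PowerSeries.coeff N (L g))) : HasWeierstrassModel x s g := by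
  obtain ⟨N, hN⟩ := hg
  have hres : PowerSeries.map (residue A) (L g) ≠ 0 := fun h => by
    have := congr_arg (PowerSeries.coeff N) h
    rw [PowerSeries.coeff_map, map_zero, residue_eq_zero_iff] at this
    exact this hN
  obtain ⟨R, h, hR, hh, hRh⟩ := PowerSeries.exists_isWeierstrassFactorization hres
  have hX : (X : A[X]).IsDistinguishedAt (maximalIdeal A) :=
    ⟨⟨fun {n} hn => by
      rw [natDegree_X, Nat.lt_one_iff] at hn
      rw [hn, coeff_X_zero]
      exact zero_mem _⟩, monic_X⟩
  have hXR : ((X * R) ^ 3).IsDistinguishedAt (maximalIdeal A) := by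
    rw [pow_three]
    exact (hX.mul hR).mul ((hX.mul hR).mul (hX.mul hR))
  let e := hXR.algEquivQuotient
  let χ : S →+* AdjoinRoot ((X * R) ^ 3) :=
    e.symm.toRingEquiv.toRingHom.comp ((Ideal.Quotient.mk _).comp L)
  have hχ : ∀ t (q : A[X]), L t = q → χ t = AdjoinRoot.mk _ q := fun t q ht =>
    e.symm_apply_eq.2 (congr_arg (Ideal.Quotient.mk _) ht)
  have hRg : Associated (Ideal.Quotient.mk (Ideal.span {(((X * R) ^ 3 : A[X]) : PowerSeries A)})
      (R : PowerSeries A)) (Ideal.Quotient.mk _ (L g)) :=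
    Associated.map _ ⟨hh.unit, hRh.symm⟩
  refine ⟨R, χ, hR.monic, hχ _ _ (by rw [h0, coe_X]), fun i => hχ _ _ (by rw [hs, coe_C]), ?_⟩
  have hR' : e.symm (Ideal.Quotient.mk _ (R : PowerSeries A)) = AdjoinRoot.mk _ R :=
    e.symm_apply_eq.2 rfl
  exact hR' ▸ hRg.map e.symm.toRingEquiv.toRingHom

theorem span_range_eq_maximalIdeal_of_sub_mem_sq {D : Type*} [CommRing D] [IsLocalRing D]
    {σ : Type*} [Finite σ] {y z : σ → D} (hy : Ideal.span (Set.range y) = maximalIdeal D)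
    (h : ∀ i, z i - y i ∈ maximalIdeal D ^ 2) : Ideal.span (Set.range z) = maximalIdeal D := by
  have hy' : ∀ i, y i ∈ maximalIdeal D := fun i => hy ▸ Ideal.subset_span ⟨i, rfl⟩
  apply le_antisymm
  · rw [Ideal.span_le]
    rintro _ ⟨i, rfl⟩
    exact (Submodule.sub_mem_iff_left _ (hy' i)).1 (Ideal.pow_le_self two_ne_zero (h i))
  · refine Submodule.le_of_le_smul_of_le_jacobson_bot (I := maximalIdeal D)
      (hy ▸ Submodule.fg_span (Set.finite_range y)) (maximalIdeal_le_jacobson _) ?_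
    conv_lhs => rw [← hy]
    rw [Ideal.span_le]
    rintro _ ⟨i, rfl⟩
    rw [← sub_sub_cancel (z i) (y i), smul_eq_mul, ← pow_two]
    exact sub_mem (Ideal.mem_sup_left (Ideal.subset_span ⟨i, rfl⟩)) (Ideal.mem_sup_right (h i))

theorem exists_associated_of_associated_mk {D : Type*} [CommRing D] [IsLocalRing D] {J : Ideal D}
    (hJ : J ≠ ⊤) {a : D} {b : D ⧸ J} (h : Associated (Ideal.Quotient.mk J a) b) :
    ∃ c, Associated a c ∧ Ideal.Quotient.mk J c = b := by
  obtain ⟨u, rfl⟩ := h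
  have := Ideal.Quotient.nontrivial_iff.2 hJ
  have := IsLocalHom.of_surjective (Ideal.Quotient.mk J) Ideal.Quotient.mk_surjective
  obtain ⟨v, hv⟩ := Ideal.Quotient.mk_surjective (u : D ⧸ J)
  have hv' : IsUnit v := isUnit_of_map_unit _ _ (hv ▸ u.isUnit)
  exact ⟨a * v, ⟨hv'.unit, rfl⟩, by rw [map_mul, hv]⟩

theorem HasWeierstrassModel.exists_ringHom {S : Type u} [CommRing S] {s : Fin (d + 1) → S} {g : S}
    (H : HasWeierstrassModel x s g) (hg : IsLiftingElement g) {D : Type u} [CommRing D] [IsDomain D]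
    [IsLocalRing D] [IsAdicComplete (maximalIdeal D) D] (ι : A →+* D) {ϖ : D}
    (hϖ : ∀ R : A[X], R.Monic → R.eval₂ ι ϖ ≠ 0)
    (hm : Ideal.span (Set.range (Fin.cons ϖ (ι ∘ x) : Fin (d + 1) → D)) = maximalIdeal D) :
    ∃ Ψ : S →+* D, Ψ g ≠ 0 ∧ Ideal.span (Set.range (Ψ ∘ s)) = maximalIdeal D := by
  obtain ⟨R, χ, hR, h0, hs, hRg⟩ := H
  have hϖm : ϖ ∈ maximalIdeal D := hm ▸ Ideal.subset_span ⟨0, rfl⟩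
  let J : Ideal D := Ideal.span {(ϖ * R.eval₂ ι ϖ) ^ 3}
  have hJ : J ≠ ⊤ := ne_top_of_le_ne_top (maximalIdeal.isMaximal D).ne_top <|
    (Ideal.span_singleton_le_iff_mem _).2
      (Ideal.pow_mem_of_mem _ (Ideal.mul_mem_right _ _ hϖm) 3 three_pos)
  let ev : AdjoinRoot ((X * R) ^ 3) →+* D ⧸ J :=
    AdjoinRoot.lift ((Ideal.Quotient.mk J).comp ι) (Ideal.Quotient.mk J ϖ) <| by
      rw [← hom_eval₂, Ideal.Quotient.eq_zero_iff_mem, eval₂_pow, eval₂_mul, eval₂_X]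
      exact Ideal.mem_span_singleton_self _
  have hev : ∀ p, ev (AdjoinRoot.mk _ p) = Ideal.Quotient.mk J (p.eval₂ ι ϖ) := fun p => by
    rw [AdjoinRoot.lift_mk, hom_eval₂]
  obtain ⟨γ, hRγ, hγ⟩ := exists_associated_of_associated_mk hJ (hev R ▸ hRg.map ev)
  have hJγ : J = Ideal.span {(ϖ * γ) ^ 3} :=
    Ideal.span_singleton_eq_span_singleton.2 ((hRγ.mul_left ϖ).pow_pow)
  let ε := Ideal.quotEquivOfEq hJγ
  obtain ⟨Ψ, hΨg, hΨ⟩ := hg hϖm (hRγ.ne_zero_iff.1 (hϖ R hR)) (ε.toRingHom.comp (ev.comp χ))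
    (congr_arg ε hγ.symm)
  have hΨs : ∀ t p, χ t = AdjoinRoot.mk _ p → Ψ t - p.eval₂ ι ϖ ∈ maximalIdeal D ^ 2 :=
    fun t p ht => by
      obtain ⟨c, hc⟩ := hΨ t (p.eval₂ ι ϖ) (congr_arg ε ((congr_arg ev ht).trans (hev p)))
      rw [hc, pow_succ ϖ, mul_assoc]
      exact Ideal.mul_mem_right _ _ (Ideal.pow_mem_pow hϖm 2)
  refine ⟨Ψ, hΨg, span_range_eq_maximalIdeal_of_sub_mem_sq hm (Fin.cases ?_ fun i => ?_)⟩
  · simpa only [eval₂_X] using! hΨs _ _ h0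
  · simpa only [eval₂_C] using! hΨs _ _ (hs i)

end WeierstrassModels

section Reduction

open IsLocalRing

/-- Homomorphisms from a finitely generated ring to a ring of power series in `d` variables over a
field of characteristic zero can be replaced by ones over a field of positive characteristic which
do not kill a given element `f`. The elements mapped to the variables are only required to be mapped
to some regular system of parameters afterwards. -/
def PowerSeriesHomsReduce (d : ℕ) : Prop :=
  ∀ (K : Type u) [Field K] [CharZero K] (S : Type u) [CommRing S] [Algebra.FiniteType ℤ S]
    (φ : S →+* MvPowerSeries (Fin d) K) (s : Fin d → S) (f : S),
    (∀ i, φ (s i) = MvPowerSeries.X i) → φ f ≠ 0 →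
    ∃ (p : ℕ) (_ : p.Prime) (k : Type u) (_ : Field k) (_ : CharP k p)
      (ψ : S →+* MvPowerSeries (Fin d) k),
      Ideal.span (Set.range (ψ ∘ s)) = maximalIdeal _ ∧ ψ f ≠ 0

theorem isJacobsonRing_int : IsJacobsonRing ℤ := by
  rw [isJacobsonRing_iff_prime_eq]
  intro P hP
  rcases eq_or_ne P ⊥ with rfl | h
  · refine eq_bot_iff.2 fun x hx => ?_
    rcases Int.isUnit_iff.1 (Ideal.mem_jacobson_bot.1 hx (3 * x)) with h1 | h1
    · have : x * x = 0 := by linarith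
      exact mul_self_eq_zero.1 this
    · nlinarith [mul_self_nonneg x]
  · have := hP.isMaximal h
    exact Ideal.jacobson_eq_self_of_isMaximal

theorem prime_of_charP_of_finiteType_int (L : Type*) [Field L] [Algebra ℤ L]
    [Algebra.FiniteType ℤ L] (p : ℕ) [CharP L p] : p.Prime := by
  have := isJacobsonRing_int
  have := finite_of_finite_type_of_isJacobsonRing ℤ L
  refine (CharP.char_is_prime_or_zero L p).resolve_right ?_
  rintro rfl
  have : CharZero L := CharP.charP_to_charZero L
  refine Int.not_isField (isField_of_isIntegral_of_isField (S := L) ?_ (Field.toIsField _))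
  exact (algebraMap ℤ L).injective_int

theorem exists_ringHom_field_ne_zero {S : Type u} [CommRing S] [Algebra.FiniteType ℤ S] {f : S}
    (hf : ¬ IsNilpotent f) :
    ∃ (p : ℕ) (_ : p.Prime) (k : Type u) (_ : Field k) (_ : CharP k p) (ψ : S →+* k), ψ f ≠ 0 := by
  have hT : Algebra.FiniteType S (Localization.Away f) :=
    IsLocalization.finiteType_of_monoid_fg (Submonoid.powers f) _
  have : Algebra.FiniteType ℤ (Localization.Away f) := Algebra.FiniteType.trans ‹_› hT
  have : Nontrivial (Localization.Away f) := by
    rw [← not_subsingleton_iff_nontrivial,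
      IsLocalization.subsingleton_iff (M := Submonoid.powers f)]
    exact hf
  obtain ⟨M, hM⟩ := Ideal.exists_maximal (Localization.Away f)
  let _ : Field (Localization.Away f ⧸ M) := Ideal.Quotient.field M
  obtain ⟨p, hp⟩ := CharP.exists (Localization.Away f ⧸ M)
  have : Algebra.FiniteType ℤ (Localization.Away f ⧸ M) :=
    Algebra.FiniteType.of_surjective (Ideal.Quotient.mkₐ ℤ M) (Ideal.Quotient.mkₐ_surjective ℤ M)
  exact ⟨p, prime_of_charP_of_finiteType_int (Localization.Away f ⧸ M) p, _, _, hp,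
    (Ideal.Quotient.mk M).comp (algebraMap S _),
    ((IsLocalization.Away.algebraMap_isUnit f).map (Ideal.Quotient.mk M)).ne_zero⟩

theorem powerSeriesHomsReduce_zero : PowerSeriesHomsReduce.{u} 0 := by
  intro K _ _ S _ _ φ s f _ hf
  have : IsDomain (MvPowerSeries (Fin 0) K) := NoZeroDivisors.to_isDomain _
  obtain ⟨p, hp, k, _, _, ψ, hψ⟩ :=
    exists_ringHom_field_ne_zero fun h : IsNilpotent f => hf (h.map φ).eq_zero
  refine ⟨p, hp, k, _, ‹_›, MvPowerSeries.C.comp ψ, ?_, ?_⟩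
  · rw [maximalIdeal_mvPowerSeries, Set.range_eq_empty, Set.range_eq_empty]
  · exact (map_ne_zero_iff _ MvPowerSeries.C_injective).2 hψ

theorem span_range_cons_sub_mul {D : Type*} [CommRing D] {d : ℕ} (y : Fin (d + 1) → D)
    (c : Fin d → D) :
    Ideal.span (Set.range (Fin.cons (y 0) fun i => y i.succ - c i * y 0 : Fin (d + 1) → D)) =
      Ideal.span (Set.range y) := by
  have h0 : y 0 ∈ Ideal.span
      (Set.range (Fin.cons (y 0) fun i => y i.succ - c i * y 0 : Fin (d + 1) → D)) :=
    Ideal.subset_span ⟨0, rfl⟩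
  apply le_antisymm <;> rw [Ideal.span_le] <;> rintro _ ⟨i, rfl⟩ <;> refine Fin.cases ?_ ?_ i
  · exact Ideal.subset_span ⟨0, rfl⟩
  · exact fun i => sub_mem (Ideal.subset_span ⟨_, rfl⟩)
      (Ideal.mul_mem_left _ _ (Ideal.subset_span ⟨0, rfl⟩))
  · exact h0
  · exact fun i => (Submodule.sub_mem_iff_left _ (Ideal.mul_mem_left _ (c i) h0)).1
      (Ideal.subset_span ⟨i.succ, rfl⟩)

theorem span_range_cons_X_eq_maximalIdeal {k : Type*} [Field k] {d : ℕ}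
    {y : Fin d → MvPowerSeries (Fin d) k} (hy : Ideal.span (Set.range y) = maximalIdeal _) :
    Ideal.span (Set.range (Fin.cons (.X 0)
      ((MvPowerSeries.finSuccEquiv k d).symm ∘ PowerSeries.C ∘ y) :
        Fin (d + 1) → MvPowerSeries (Fin (d + 1)) k)) = maximalIdeal _ := by
  let e := MvPowerSeries.finSuccEquiv k d
  have hX : ∀ i : Fin d, e.symm (PowerSeries.C (.X i)) = .X i.succ := fun i =>
    e.symm_apply_eq.2 (MvPowerSeries.finSuccEquiv_X_succ ..).symm
  have hmap := congr_arg (Ideal.map (e.symm.toRingEquiv.toRingHom.comp PowerSeries.C))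
    (hy.trans maximalIdeal_mvPowerSeries)
  rw [Ideal.map_span, Ideal.map_span, ← Set.range_comp, ← Set.range_comp] at hmap
  have hsucc : Set.range (Fin.tail (.X : Fin (d + 1) → MvPowerSeries (Fin (d + 1)) k)) =
      Set.range (e.symm.toRingEquiv.toRingHom.comp PowerSeries.C ∘ .X) :=
    congr_arg Set.range (funext fun i => (hX i).symm)
  rw [maximalIdeal_mvPowerSeries, ← Fin.cons_self_tail MvPowerSeries.X, Fin.range_cons,
    Fin.range_cons, Ideal.span_insert, Ideal.span_insert, hsucc, ← hmap]
  rfl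

theorem eval₂_X_zero_ne_zero {A k : Type*} [CommRing A] [Field k] {d : ℕ}
    (ψ : A →+* MvPowerSeries (Fin d) k) {R : Polynomial A} (hR : R.Monic) :
    R.eval₂ ((MvPowerSeries.finSuccEquiv k d).symm.toRingEquiv.toRingHom.comp
      (PowerSeries.C.comp ψ)) (.X 0) ≠ 0 := by
  let e := MvPowerSeries.finSuccEquiv k d
  have h : Polynomial.eval₂RingHom (e.symm.toRingEquiv.toRingHom.comp (PowerSeries.C.comp ψ))
      (.X 0) = (e.symm.toRingEquiv.toRingHom.comp Polynomial.coeToPowerSeries.ringHom).comp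
        (Polynomial.mapRingHom ψ) := by
    refine Polynomial.ringHom_ext (fun a => ?_) ?_
    · simp
    · simpa using (e.symm_apply_eq.2 (MvPowerSeries.finSuccEquiv_X_zero ..).symm).symm
  refine fun h0 => (hR.map ψ).ne_zero (Polynomial.coe_injective _ (e.symm.injective ?_))
  refine ((RingHom.congr_fun h R).symm.trans h0).trans ?_
  rw [Polynomial.coe_zero, map_zero]

theorem PowerSeriesHomsReduce.exists_of_hasWeierstrassModel {d : ℕ}
    (hd : PowerSeriesHomsReduce.{u} d) {K : Type u} [Field K] [CharZero K] {S : Type u} [CommRing S]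
    [Algebra.FiniteType ℤ S] {s : Fin (d + 1) → S} {g : S} (hg : IsLiftingElement g)
    (H : HasWeierstrassModel (MvPowerSeries.X : Fin d → MvPowerSeries (Fin d) K) s g) :
    ∃ (p : ℕ) (_ : p.Prime) (k : Type u) (_ : Field k) (_ : CharP k p)
      (ψ : S →+* MvPowerSeries (Fin (d + 1)) k),
      Ideal.span (Set.range (ψ ∘ s)) = maximalIdeal _ ∧ ψ g ≠ 0 := by
  obtain ⟨A, x, _, hx, H⟩ := H.exists_finiteType_subring
  have : IsDomain (MvPowerSeries (Fin d) K) := NoZeroDivisors.to_isDomain _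
  obtain ⟨p, hp, k, _, _, ψ, hψ, -⟩ := hd K A A.subtype x 1 hx (by
    rw [map_one]; exact one_ne_zero)
  have : IsDomain (MvPowerSeries (Fin (d + 1)) k) := NoZeroDivisors.to_isDomain _
  obtain ⟨Ψ, hΨg, hΨs⟩ := H.exists_ringHom hg _ (fun R hR => eval₂_X_zero_ne_zero ψ hR)
    (span_range_cons_X_eq_maximalIdeal hψ)
  exact ⟨p, hp, k, _, ‹_›, Ψ, hΨs, hΨg⟩

theorem PowerSeriesHomsReduce.succ_of_injective {d : ℕ} (hd : PowerSeriesHomsReduce.{u} d)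
    {K : Type u} [Field K] [CharZero K] {S : Type u} [CommRing S] [Algebra.FiniteType ℤ S]
    {φ : S →+* MvPowerSeries (Fin (d + 1)) K} (hφ : Function.Injective φ) {s : Fin (d + 1) → S}
    (hs : ∀ i, φ (s i) = MvPowerSeries.X i) {f : S} (hf : f ≠ 0) :
    ∃ (p : ℕ) (_ : p.Prime) (k : Type u) (_ : Field k) (_ : CharP k p)
      (ψ : S →+* MvPowerSeries (Fin (d + 1)) k),
      Ideal.span (Set.range (ψ ∘ s)) = maximalIdeal _ ∧ ψ f ≠ 0 := by
  have : IsDomain (MvPowerSeries (Fin (d + 1)) K) := NoZeroDivisors.to_isDomain _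
  have : CharZero (MvPowerSeries (Fin (d + 1)) K) :=
    charZero_of_injective_algebraMap (R := K) MvPowerSeries.C_injective
  have : IsDomain S := hφ.isDomain φ
  have : CharZero S := (RingHom.charZero_iff hφ).2 ‹_›
  obtain ⟨g, hfg, hg0, hg⟩ := exists_dvd_isLiftingElement hf
  obtain ⟨c, L, hL0, hLs, hLg⟩ := exists_ringHom_isUnit_coeff ((map_ne_zero_iff φ hφ).2 hg0)
  obtain ⟨p, hp, k, _, _, ψ, hψs, hψg⟩ := hd.exists_of_hasWeierstrassModel hg <|
    hasWeierstrassModel_of_ringHom (s := Fin.cons (s 0) fun i => s i.succ - (c i : S) * s 0)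
      (L.comp φ) (by simp [hs, hL0]) (fun i => by simp [hs, ← hLs]) hLg
  refine ⟨p, hp, k, _, ‹_›, ψ, ?_, ne_zero_of_dvd_ne_zero hψg (map_dvd ψ hfg)⟩
  rw [← hψs, ← span_range_cons_sub_mul (ψ ∘ s) fun i => ((c i : ℤ) : MvPowerSeries _ k)]
  congr 2
  refine funext (Fin.cases rfl fun i => ?_)
  simp

theorem powerSeriesHomsReduce (d : ℕ) : PowerSeriesHomsReduce.{u} d := by
  induction d with
  | zero => exact powerSeriesHomsReduce_zero
  | succ d ih =>
    intro K _ _ S _ _ φ s f hs hf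
    have : Algebra.FiniteType ℤ φ.range :=
      Algebra.FiniteType.of_surjective φ.rangeRestrict.toIntAlgHom φ.rangeRestrict_surjective
    obtain ⟨p, hp, k, _, _, ψ, hψs, hψf⟩ := ih.succ_of_injective (φ := φ.range.subtype)
      Subtype.val_injective (s := φ.rangeRestrict ∘ s) hs (f := φ.rangeRestrict f)
      (fun h => hf (congr_arg Subtype.val h))
    exact ⟨p, hp, k, _, ‹_›, ψ.comp φ.rangeRestrict, hψs, hψf⟩

end Reduction

section KrullDimension

open IsLocalRing

theorem ringKrullDim_le_of_isIntegral_of_injective {R S : Type*} [CommRing R] [CommRing S]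
    [Algebra R S] [Algebra.IsIntegral R S] (h : Function.Injective (algebraMap R S)) :
    ringKrullDim R ≤ ringKrullDim S := by
  refine iSup_le fun l => ?_
  have hbot : (⊥ : Ideal S).comap (algebraMap R S) ≤ l.head.asIdeal := by
    rw [← RingHom.ker_eq_comap_bot, (RingHom.injective_iff_ker_eq_bot _).1 h]
    exact bot_le
  obtain ⟨P, -, _, hP⟩ := Ideal.exists_ideal_over_prime_of_isIntegral l.head.asIdeal ⊥ hbot
  have : P.LiesOver (RelSeries.head l).asIdeal := ⟨hP.symm⟩
  obtain ⟨L, hL, -⟩ := Ideal.exists_ltSeries_of_hasGoingUp l P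
  exact Order.le_krullDim_iff.2 ⟨L, hL⟩

theorem ringKrullDim_le_of_isIntegral (R S : Type*) [CommRing R] [CommRing S] [Algebra R S]
    [Algebra.IsIntegral R S] : ringKrullDim S ≤ ringKrullDim R :=
  Order.krullDim_le_of_strictMono (PrimeSpectrum.comap (algebraMap R S)) fun P _ h =>
    have := P.isPrime
    Ideal.IsIntegral.comap_lt_comap (R := R) (I := P.asIdeal) h

theorem exists_isMaximal_le_height {T : Type*} [CommRing T] {d : ℕ}
    (hd : (d : WithBot ℕ∞) ≤ ringKrullDim T) : ∃ M : Ideal T, M.IsMaximal ∧ d ≤ M.height := by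
  obtain ⟨l, rfl⟩ := Order.le_krullDim_iff.1 hd
  obtain ⟨M, hM, hlM⟩ := Ideal.exists_le_maximal _ l.last.isPrime.ne_top
  refine ⟨M, hM, ?_⟩
  calc (l.length : ℕ∞) ≤ Order.height l.last := Order.length_le_height_last
    _ = l.last.asIdeal.height := l.last.height_eq_orderHeight.symm
    _ ≤ M.height := Ideal.height_mono hlM

theorem ringKrullDim_mvPowerSeries (k : Type*) [Field k] (d : ℕ) :
    ringKrullDim (MvPowerSeries (Fin d) k) = d := by
  refine le_antisymm ?_ ?_
  · have : IsNoetherianRing (MvPowerSeries (Fin d) k) := MvPowerSeries.isNoetherianRing k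
    refine (ringKrullDim_le_spanFinrank_maximalIdeal _).trans ?_
    rw [maximalIdeal_mvPowerSeries]
    have hrank := Submodule.spanFinrank_span_le_ncard_of_finite (R := MvPowerSeries (Fin d) k)
      (Set.finite_range (MvPowerSeries.X : Fin d → MvPowerSeries (Fin d) k))
    have hcard := Set.ncard_image_le (f := (MvPowerSeries.X : Fin d → MvPowerSeries (Fin d) k))
      Set.finite_univ
    rw [Set.image_univ, Set.ncard_univ, Nat.card_fin] at hcard
    exact_mod_cast hrank.trans hcard
  · induction d with
    | zero => exact_mod_cast ringKrullDim_nonneg_of_nontrivial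
    | succ d ih =>
      rw [ringKrullDim_eq_of_ringEquiv (MvPowerSeries.finSuccEquiv k d).toRingEquiv, Nat.cast_succ]
      exact (add_le_add_left ih 1).trans ringKrullDim_succ_le_ringKrullDim_powerseries

theorem algebraMap_injective_of_le_ringKrullDim {A S : Type*} [CommRing A] [IsDomain A]
    [CommRing S] [Algebra A S] [Algebra.IsIntegral A S] {d : ℕ} (hA : ringKrullDim A ≤ d)
    (hS : d ≤ ringKrullDim S) : Function.Injective (algebraMap A S) := by
  refine (injective_iff_map_eq_zero _).2 fun a ha => by_contra fun ha0 => ?_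
  let f : A ⧸ Ideal.span {a} →+* S := Ideal.Quotient.lift _ (algebraMap A S) <|
    (Ideal.span_singleton_le_iff_mem (RingHom.ker (algebraMap A S))).2 ha
  algebraize [f]
  have : IsScalarTower A (A ⧸ Ideal.span {a}) S := IsScalarTower.of_algebraMap_eq fun _ => rfl
  have : Algebra.IsIntegral (A ⧸ Ideal.span {a}) S := Algebra.IsIntegral.tower_top A
  have hdim : ((d + 1 : ℕ) : WithBot ℕ∞) ≤ d := calc
    ((d + 1 : ℕ) : WithBot ℕ∞) = d + 1 := Nat.cast_succ d
    _ ≤ ringKrullDim (A ⧸ Ideal.span {a}) + 1 :=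
      add_le_add_left (hS.trans (ringKrullDim_le_of_isIntegral _ S)) 1
    _ ≤ ringKrullDim A :=
      ringKrullDim_quotient_succ_le_of_nonZeroDivisor (mem_nonZeroDivisors_of_ne_zero ha0)
    _ ≤ d := hA
  exact Nat.not_succ_le_self d (by exact_mod_cast hdim)

theorem ringKrullDim_le_of_hasGoingDown {R S : Type*} [CommRing R] [CommRing S] [IsLocalRing R]
    [IsLocalRing S] [Algebra R S] [IsLocalHom (algebraMap R S)] [Algebra.HasGoingDown R S] :
    ringKrullDim R ≤ ringKrullDim S := by
  rw [← maximalIdeal_height_eq_ringKrullDim, ← maximalIdeal_height_eq_ringKrullDim,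
    WithBot.coe_le_coe]
  change (closedPoint R).asIdeal.height ≤ (closedPoint S).asIdeal.height
  rw [PrimeSpectrum.height_eq_orderHeight, PrimeSpectrum.height_eq_orderHeight]
  refine Order.height_le fun l hl => ?_
  have : (maximalIdeal S).LiesOver l.last.asIdeal :=
    ⟨hl ▸ (maximalIdeal_comap (algebraMap R S)).symm⟩
  obtain ⟨L, hlen, hL, -⟩ := Ideal.exists_ltSeries_of_hasGoingDown l (maximalIdeal S)
  exact hlen ▸ Order.length_le_height hL.le

theorem radical_map_maximalIdeal {A T L : Type*} [CommRing A] [IsLocalRing A] [CommRing T]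
    [Algebra A T] [Algebra.IsIntegral A T] (M : Ideal T) [M.IsMaximal] [CommRing L] [IsLocalRing L]
    [Algebra T L] [IsLocalization.AtPrime L M] :
    ((maximalIdeal A).map ((algebraMap T L).comp (algebraMap A T))).radical = maximalIdeal L := by
  have hLM : (maximalIdeal L).comap (algebraMap T L) = M :=
    IsLocalization.AtPrime.under_maximalIdeal L M
  have hMA : M.comap (algebraMap A T) = maximalIdeal A :=
    eq_maximalIdeal (Ideal.isMaximal_comap_of_isIntegral_of_isMaximal M)
  refine le_antisymm ((maximalIdeal.isMaximal L).isPrime.radical_le_iff.2 ?_) ?_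
  · rw [Ideal.map_le_iff_le_comap, ← Ideal.comap_comap, hLM, hMA]
  rw [Ideal.radical_eq_sInf]
  refine le_sInf fun P ⟨hAP, hP⟩ => ?_
  have hPA : (P.comap (algebraMap T L)).comap (algebraMap A T) = maximalIdeal A :=
    ((maximalIdeal.isMaximal A).eq_of_le Ideal.IsPrime.ne_top' <| by
      rwa [Ideal.comap_comap, ← Ideal.map_le_iff_le_comap]).symm
  have hPmax : (P.comap (algebraMap T L)).IsMaximal :=
    Ideal.isMaximal_of_isIntegral_of_isMaximal_comap (R := A) _ (hPA ▸ maximalIdeal.isMaximal A)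
  have hPM : P.comap (algebraMap T L) = M := hPmax.eq_of_le Ideal.IsPrime.ne_top'
    ((Ideal.comap_mono (le_maximalIdeal hP.ne_top)).trans_eq hLM)
  rw [← IsLocalization.map_under M.primeCompl L (maximalIdeal L), Ideal.map_le_iff_le_comap, hPM]
  exact hLM.le

theorem radical_map_radical {R S : Type*} [CommRing R] [CommRing S] (f : R →+* S) (J : Ideal R) :
    (J.radical.map f).radical = (J.map f).radical :=
  le_antisymm (Ideal.radical_le_radical_iff.2 (Ideal.map_radical_le f))
    (Ideal.radical_mono (Ideal.map_mono Ideal.le_radical))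

end KrullDimension

section FiniteExtension

open IsLocalRing TensorProduct

theorem hasMaxQuasilength_algebraMap_of_charP {A : Type u} {T : Type v} [CommRing A] [IsLocalRing A]
    [IsNoetherianRing A] [CommRing T] [Algebra A T] [Module.Finite A T] (p : ℕ) [Fact p.Prime]
    [CharP A p] (hAT : Function.Injective (algebraMap A T)) {d : ℕ} {s : Fin d → A}
    (hd : (d : WithBot ℕ∞) ≤ ringKrullDim A)
    (hs : (Ideal.span (Set.range s)).radical = maximalIdeal A) :
    HasMaxQuasilength (algebraMap A T ∘ s) := by
  have : IsNoetherianRing T := IsNoetherianRing.of_finite A T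
  obtain ⟨M, _, hM⟩ := exists_isMaximal_le_height
    (hd.trans (ringKrullDim_le_of_isIntegral_of_injective hAT))
  let L := Localization.AtPrime M
  have : IsNoetherianRing L := IsLocalization.isNoetherianRing M.primeCompl L inferInstance
  let f : A →+* L := (algebraMap T L).comp (algebraMap A T)
  have : CharP L p := (CharP.charP_iff_prime_eq_zero Fact.out).2 <| by
    rw [← map_natCast f, CharP.cast_eq_zero, map_zero]
  refine .of_map (algebraMap T L) (hasMaxQuasilength_of_charP p ?_ ?_)
  · rw [IsLocalization.AtPrime.ringKrullDim_eq_height M L]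
    exact_mod_cast hM
  · rw [← Function.comp_assoc, ← RingHom.coe_comp, Set.range_comp, ← Ideal.map_span,
      ← radical_map_radical, hs]
    exact radical_map_maximalIdeal M

theorem algebraMap_tensorProduct_injective {S A T : Type*} [CommRing S] [CommRing A] [CommRing T]
    [Algebra S A] [Algebra S T] [IsDomain A] {Φ : T →ₗ[S] S} (hΦ : algebraMap S A (Φ 1) ≠ 0) :
    Function.Injective (algebraMap A (A ⊗[S] T)) := by
  refine (injective_iff_map_eq_zero _).2 fun a ha => ?_
  have h := congr_arg (TensorProduct.rid S A ∘ Φ.lTensor A) (show a ⊗ₜ[S] (1 : T) = 0 from ha)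
  simp only [Function.comp_apply, LinearMap.lTensor_tmul, TensorProduct.rid_tmul, map_zero,
    Algebra.smul_def] at h
  exact (mul_eq_zero.1 h).resolve_left hΦ

theorem hasMaxQuasilength_algebraMap_of_ringHom {S T A : Type*} [CommRing S] [CommRing T]
    [Algebra S T] [Module.Finite S T] [CommRing A] [IsDomain A] [IsLocalRing A] [IsNoetherianRing A]
    (p : ℕ) [Fact p.Prime] [CharP A p] {ψ : S →+* A} {Φ : T →ₗ[S] S} (hΦ : ψ (Φ 1) ≠ 0) {d : ℕ}
    {s : Fin d → S} (hd : (d : WithBot ℕ∞) ≤ ringKrullDim A)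
    (hs : (Ideal.span (Set.range (ψ ∘ s))).radical = maximalIdeal A) :
    HasMaxQuasilength (algebraMap S T ∘ s) := by
  algebraize [ψ]
  refine .of_map (Algebra.TensorProduct.includeRight : T →ₐ[S] A ⊗[S] T).toRingHom ?_
  convert hasMaxQuasilength_algebraMap_of_charP p
    (algebraMap_tensorProduct_injective (T := T) (A := A) hΦ) hd hs
  funext i
  exact ((Algebra.TensorProduct.includeRight : T →ₐ[S] A ⊗[S] T).commutes (s i)).trans
    (IsScalarTower.algebraMap_apply S A (A ⊗[S] T) (s i))

theorem exists_linearMap_apply_ne_zero {A M : Type*} [CommRing A] [IsDomain A] [AddCommGroup M]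
    [Module A M] [Module.FinitePresentation A M] {m : M} (hm : ∀ a : A, a • m = 0 → a = 0) :
    ∃ Φ : M →ₗ[A] A, Φ m ≠ 0 := by
  let L := FractionRing A
  have hm' : (1 : L) ⊗ₜ[A] m ≠ 0 := fun h0 => by
    obtain ⟨a, ha⟩ := (IsLocalizedModule.eq_zero_iff (nonZeroDivisors A)
      (TensorProduct.mk A L M 1)).1 h0
    exact nonZeroDivisors.coe_ne_zero a (hm _ ha)
  obtain ⟨l, hl⟩ : ∃ l : Module.Dual L (L ⊗[A] M), l (1 ⊗ₜ m) ≠ 0 := by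
    by_contra! h
    exact hm' ((Module.forall_dual_apply_eq_zero_iff L _).1 h)
  obtain ⟨Φ, a, hΦ⟩ := Module.FinitePresentation.exists_lift_of_isLocalizedModule
    (nonZeroDivisors A) (Algebra.linearMap A L)
    ((l.restrictScalars A).comp (TensorProduct.mk A L M 1))
  refine ⟨Φ, fun h0 => hl ?_⟩
  have h := LinearMap.congr_fun hΦ m
  simp only [LinearMap.comp_apply, h0, map_zero, LinearMap.smul_apply] at h
  exact (smul_eq_zero.1 (h.symm : (a : A) • l (1 ⊗ₜ m) = 0)).resolve_left
    (nonZeroDivisors.coe_ne_zero a)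

end FiniteExtension

section Descent

open scoped Pointwise

theorem exists_finite_forall_mem_span {A R ι : Type*} [CommRing A] [CommRing R] [Algebra A R]
    [Finite ι] {e : ι → R} (he : Submodule.span A (Set.range e) = ⊤) {Q : Set R} (hQ : Q.Finite) :
    ∃ W : Set A, W.Finite ∧ ∀ S : Subalgebra ℤ A, W ⊆ S → Q ⊆ Submodule.span S (Set.range e) := by
  have := Fintype.ofFinite ι
  have hcoeff (r : R) : ∃ c : ι → A, ∑ i, c i • e i = r :=
    (Submodule.mem_span_range_iff_exists_fun A).1 (he ▸ Submodule.mem_top)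
  choose c hc using hcoeff
  refine ⟨⋃ q ∈ Q, Set.range (c q), hQ.biUnion fun q _ => Set.finite_range _, fun S hS q hq => ?_⟩
  rw [← hc q]
  refine Submodule.sum_mem _ fun i _ => ?_
  have hcS : c q i ∈ S := hS (Set.mem_biUnion hq ⟨i, rfl⟩)
  exact Submodule.smul_mem _ (⟨c q i, hcS⟩ : S) (Submodule.subset_span ⟨i, rfl⟩)

theorem exists_finiteType_subalgebra_finite {A R : Type*} [CommRing A] [CommRing R] [Algebra A R]
    [Module.Finite A R] (Φ : R →ₗ[A] A) {W : Set A} (hW : W.Finite) {Q : Set R} (hQ : Q.Finite) :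
    ∃ (S : Subalgebra ℤ A) (T : Subalgebra S R), Algebra.FiniteType ℤ S ∧ Module.Finite S T ∧
      W ⊆ S ∧ Q ⊆ T ∧ ∀ r ∈ T, Φ r ∈ S := by
  obtain ⟨m, e, he⟩ := Module.Finite.exists_fin (R := A) (M := R)
  obtain ⟨V, hV, hVe⟩ := exists_finite_forall_mem_span he
    (hQ.union ((Set.finite_singleton 1).union ((Set.finite_range e).mul (Set.finite_range e))))
  let S : Subalgebra ℤ A := Algebra.adjoin ℤ (W ∪ V ∪ Set.range (Φ ∘ e))
  have hadjoin : W ∪ V ∪ Set.range (Φ ∘ e) ⊆ S := Algebra.subset_adjoin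
  simp only [Set.union_subset_iff] at hadjoin
  obtain ⟨⟨hWS, hVS⟩, hΦS⟩ := hadjoin
  let N : Submodule S R := Submodule.span S (Set.range e)
  obtain ⟨hQN, h1N, hmulN⟩ :
      Q ⊆ (N : Set R) ∧ {1} ⊆ (N : Set R) ∧ Set.range e * Set.range e ⊆ (N : Set R) := by
    simpa only [Set.union_subset_iff] using hVe S hVS
  have hNN : N * N ≤ N := by
    rw [Submodule.span_mul_span]
    exact Submodule.span_le.2 hmulN
  refine ⟨S, N.toSubalgebra (h1N rfl) fun a b ha hb => hNN (Submodule.mul_mem_mul ha hb),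
    ?_, Module.Finite.span_of_finite S (Set.finite_range e), hWS, hQN, fun r hr => ?_⟩
  · exact Subalgebra.fg_iff_finiteType _ |>.1
      (Subalgebra.fg_def.2 ⟨_, (hW.union hV).union (Set.finite_range _), rfl⟩)
  · replace hr : r ∈ N := hr
    induction hr using Submodule.span_induction with
    | mem y hy =>
      obtain ⟨i, rfl⟩ := hy
      exact hΦS ⟨i, rfl⟩
    | zero => exact (map_zero Φ).symm ▸ S.zero_mem
    | add a b _ _ ha hb => exact (map_add Φ a b).symm ▸ S.add_mem ha hb
    | smul a b _ hb => exact (map_smul Φ (a : A) b).symm ▸ S.mul_mem a.2 hb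

theorem HasPowerFiltration.exists_descent {A R : Type u} [CommRing A] [CommRing R] [Algebra A R]
    [Module.Finite A R] (Φ : R →ₗ[A] A) {d : ℕ} {x : Fin d → A} {t : Fin d → ℕ} {n h : ℕ}
    (H : HasPowerFiltration (algebraMap A R ∘ x) t n h) :
    ∃ (S : Type u) (_ : CommRing S) (_ : Algebra.FiniteType ℤ S) (j : S →+* A) (s : Fin d → S)
      (T : Type u) (_ : CommRing T) (_ : Algebra S T) (_ : Module.Finite S T) (Ψ : T →ₗ[S] S),
      (∀ i, j (s i) = x i) ∧ j (Ψ 1) = Φ 1 ∧ HasPowerFiltration (algebraMap S T ∘ s) t n h := by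
  obtain ⟨Q, hQ, hdescent⟩ := H.exists_finite_descent
  obtain ⟨S, T, hS, hT, hxS, hQT, hΦ⟩ :=
    exists_finiteType_subalgebra_finite Φ (Set.finite_range x) hQ
  let Ψ : T →ₗ[S] S :=
    { toFun := fun r => ⟨Φ r, hΦ r r.2⟩
      map_add' := fun a b => Subtype.ext (map_add Φ a.1 b.1)
      map_smul' := fun a b => Subtype.ext (map_smul Φ (a : A) b.1) }
  refine ⟨S, inferInstance, hS, S.val.toRingHom, fun i => ⟨x i, hxS ⟨i, rfl⟩⟩, T, inferInstance,
    inferInstance, hT, Ψ, fun _ => rfl, rfl,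
    hdescent T.val.toRingHom Subtype.val_injective _ rfl ?_⟩
  exact fun q hq => ⟨⟨q, hQT hq⟩, rfl⟩

theorem hasMaxQuasilength_algebraMap_X {K : Type u} [Field K] [CharZero K] {d : ℕ} {R : Type u}
    [CommRing R] [Algebra (MvPowerSeries (Fin d) K) R] [Module.Finite (MvPowerSeries (Fin d) K) R]
    (hR : Function.Injective (algebraMap (MvPowerSeries (Fin d) K) R)) :
    HasMaxQuasilength (algebraMap (MvPowerSeries (Fin d) K) R ∘ MvPowerSeries.X) := by
  intro t ht n h H
  have : IsDomain (MvPowerSeries (Fin d) K) := NoZeroDivisors.to_isDomain _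
  have : IsNoetherianRing (MvPowerSeries (Fin d) K) := MvPowerSeries.isNoetherianRing K
  have := Module.finitePresentation_of_finite (MvPowerSeries (Fin d) K) R
  obtain ⟨Φ, hΦ⟩ := exists_linearMap_apply_ne_zero (A := MvPowerSeries (Fin d) K) (m := (1 : R))
    fun a ha => (map_eq_zero_iff _ hR).1 (by rw [Algebra.algebraMap_eq_smul_one, ha])
  obtain ⟨S, _, _, j, s, T, _, _, _, Ψ, hjs, hjΨ, H'⟩ := H.exists_descent Φ
  obtain ⟨p, hp, k, _, _, ψ, hψs, hψΨ⟩ := powerSeriesHomsReduce d K S j s (Ψ 1) hjs (hjΨ ▸ hΦ)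
  have : Fact p.Prime := ⟨hp⟩
  have : IsDomain (MvPowerSeries (Fin d) k) := NoZeroDivisors.to_isDomain _
  have : IsNoetherianRing (MvPowerSeries (Fin d) k) := MvPowerSeries.isNoetherianRing k
  have : CharP (MvPowerSeries (Fin d) k) p :=
    charP_of_injective_ringHom MvPowerSeries.C_injective p
  refine hasMaxQuasilength_algebraMap_of_ringHom p hψΨ (ringKrullDim_mvPowerSeries k d).ge ?_
    t ht n h H'
  rw [hψs, (IsLocalRing.maximalIdeal.isMaximal _).isPrime.isRadical.radical]

end Descent

section Complete

open IsLocalRing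

theorem isPrecomplete_pi {A ι : Type*} [CommRing A] [Finite ι] (I : Ideal A) [IsPrecomplete I A] :
    IsPrecomplete I (ι → A) := by
  refine ⟨fun f hf => ?_⟩
  have hlim (i : ι) : ∃ l : A, ∀ n, f n i ≡ l [SMOD (I ^ n • ⊤ : Submodule A A)] := by
    refine IsPrecomplete.prec inferInstance (f := fun n => f n i) fun hmn => ?_
    rw [SModEq.sub_mem, smul_eq_mul, Ideal.mul_top]
    exact (mem_smul_top_pi _ _).1 (SModEq.sub_mem.1 (hf hmn)) i
  choose l hl using hlim
  refine ⟨l, fun n => SModEq.sub_mem.2 ((mem_smul_top_pi _ _).2 fun i => ?_)⟩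
  simpa only [SModEq.sub_mem, smul_eq_mul, Ideal.mul_top] using! hl i n

theorem finite_of_span_sup_smul_top_eq_top {A M : Type*} [CommRing A] (I : Ideal A)
    [IsPrecomplete I A] [AddCommGroup M] [Module A M] [IsHausdorff I M] {G : Set M} (hG : G.Finite)
    (h : Submodule.span A G ⊔ I • ⊤ = ⊤) : Module.Finite A M := by
  have := hG.fintype
  have := isPrecomplete_pi (ι := G) I
  refine Module.Finite.of_surjective (Fintype.linearCombination A ((↑) : G → M))
    (surjective_of_mkQ_comp_surjective (I := I) ?_)
  rw [← LinearMap.range_eq_top, LinearMap.range_comp, Fintype.range_linearCombination,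
    Subtype.range_coe, Submodule.map_mkQ_eq_top, sup_comm, h]

theorem exists_finite_span_sup_pow_eq_top {A S : Type*} [CommRing A] [CommRing S] [Algebra A S]
    {m : Ideal S} (hm : m.FG)
    (hsurj : Function.Surjective ((Ideal.Quotient.mk m).comp (algebraMap A S))) (n : ℕ) :
    ∃ G : Set S, G.Finite ∧ Submodule.span A G ⊔ (m ^ n).restrictScalars A = ⊤ := by
  induction n with
  | zero => exact ⟨∅, Set.finite_empty, by simp⟩
  | succ n ih =>
    obtain ⟨G, hG, hspan⟩ := ih
    obtain ⟨F, hF⟩ := Ideal.FG.pow (n := n) hm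
    refine ⟨G ∪ F, hG.union F.finite_toSet, eq_top_iff.2 (hspan.ge.trans (sup_le ?_ ?_))⟩
    · exact le_sup_of_le_left (Submodule.span_mono Set.subset_union_left)
    intro y hy
    rw [Submodule.restrictScalars_mem, ← hF] at hy
    induction hy using Submodule.span_induction with
    | mem y hy => exact Submodule.mem_sup_left (Submodule.subset_span (.inr hy))
    | zero => exact zero_mem _
    | add y z _ _ hy hz => exact add_mem hy hz
    | smul a y hy ih =>
      obtain ⟨c, hc⟩ := hsurj (Ideal.Quotient.mk m a)
      have hac : a - algebraMap A S c ∈ m := Ideal.Quotient.eq.1 hc.symm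
      have hsplit : a • y = c • y + (a - algebraMap A S c) * y := by
        rw [smul_eq_mul, Algebra.smul_def]
        ring
      rw [hsplit]
      refine add_mem (Submodule.smul_mem _ _ ih) (Submodule.mem_sup_right ?_)
      rw [Submodule.restrictScalars_mem, pow_succ']
      exact Ideal.mul_mem_mul hac (hF ▸ hy)

theorem isHausdorff_of_map_le {A S : Type*} [CommRing A] [CommRing S] [Algebra A S] {I : Ideal A}
    {m : Ideal S} [IsHausdorff m S] (h : I.map (algebraMap A S) ≤ m) : IsHausdorff I S := by
  refine ⟨fun y hy => IsHausdorff.haus (I := m) inferInstance y fun n => ?_⟩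
  have hyn := hy n
  rw [SModEq.zero, Ideal.smul_top_eq_map, Submodule.restrictScalars_mem, Ideal.map_pow] at hyn
  rw [SModEq.zero, smul_eq_mul, Ideal.mul_top]
  exact Ideal.pow_right_mono h n hyn

theorem finite_of_pow_le_map {A S : Type*} [CommRing A] [CommRing S] [Algebra A S] {I : Ideal A}
    [IsPrecomplete I A] {m : Ideal S} [IsHausdorff m S] (hm : m.FG)
    (hsurj : Function.Surjective ((Ideal.Quotient.mk m).comp (algebraMap A S)))
    (hI : I.map (algebraMap A S) ≤ m) {N : ℕ} (hN : m ^ N ≤ I.map (algebraMap A S)) :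
    Module.Finite A S := by
  obtain ⟨G, hG, hspan⟩ := exists_finite_span_sup_pow_eq_top hm hsurj N
  have := isHausdorff_of_map_le hI
  refine finite_of_span_sup_smul_top_eq_top I hG (top_le_iff.1 (hspan.ge.trans ?_))
  rw [Ideal.smul_top_eq_map]
  exact sup_le_sup_left (fun _ hy => hN hy) _

theorem exists_algHom_mvPowerSeries_X {K S : Type*} [Field K] [CommRing S] [Algebra K S]
    (I : Ideal S) [hI : IsAdicComplete I S] {σ : Type*} [Finite σ] {x : σ → S} (hx : ∀ i, x i ∈ I) :
    ∃ φ : MvPowerSeries σ K →ₐ[K] S, ∀ i, φ (MvPowerSeries.X i) = x i := by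
  let _ : UniformSpace K := ⊥
  have : DiscreteTopology K := ⟨rfl⟩
  let _ : TopologicalSpace S := I.adicTopology
  have hadic : IsAdic I := rfl
  let _ : UniformSpace S := IsTopologicalAddGroup.rightUniformSpace S
  have : IsUniformAddGroup S := isUniformAddGroup_of_addCommGroup
  obtain ⟨_, _⟩ := hadic.isAdicComplete_iff.1 hI
  have : IsLinearTopology S S := I.isLinearTopology
  have : ContinuousSMul K S := by
    refine ⟨?_⟩
    simp only [Algebra.smul_def]
    exact (continuous_of_discreteTopology.comp continuous_fst).mul continuous_snd
  have hEval : MvPowerSeries.HasEval x := by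
    refine ⟨fun i => hadic.hasBasis_nhds_zero.tendsto_right_iff.2 fun n _ => ?_, ?_⟩
    · filter_upwards [Filter.eventually_ge_atTop n] with k hk
      exact Ideal.pow_le_pow_right hk (Ideal.pow_mem_pow (hx i) k)
    · rw [Filter.cofinite_eq_bot]
      exact Filter.tendsto_bot
  refine ⟨MvPowerSeries.aeval hEval, fun i => ?_⟩
  simpa using MvPowerSeries.aeval_coe hEval (MvPolynomial.X i : MvPolynomial σ K)

theorem formallySmooth_of_charZero (F k : Type*) [Field F] [CharZero F] [Field k] [Algebra F k] :
    Algebra.FormallySmooth F k := by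
  obtain ⟨ι, s, hs⟩ := exists_isTranscendenceBasis' F k
  have := hs.isAlgebraic_field
  exact .of_algebraicIndependent_of_isSeparable hs.1

theorem exists_residue_comp_eq_id (S : Type*) [CommRing S] [IsLocalRing S]
    [IsAdicComplete (maximalIdeal S) S] [Algebra ℚ S] :
    ∃ g : ResidueField S →+* S, (residue S).comp g = RingHom.id _ := by
  have := formallySmooth_of_charZero ℚ (ResidueField S)
  obtain ⟨g, hg⟩ := Algebra.FormallySmooth.exists_mkₐ_comp_eq_of_isAdicComplete
    (I := maximalIdeal S) (AlgHom.id ℚ (ResidueField S))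
  exact ⟨g, congr_arg AlgHom.toRingHom hg⟩

theorem hasMaxQuasilength_of_isAdicComplete {S : Type u} [CommRing S] [IsLocalRing S]
    [IsAdicComplete (maximalIdeal S) S] [Algebra ℚ S] (hm : (maximalIdeal S).FG) {d : ℕ}
    (hd : (d : WithBot ℕ∞) ≤ ringKrullDim S) {x : Fin d → S}
    (hx : (Ideal.span (Set.range x)).radical = maximalIdeal S) : HasMaxQuasilength x := by
  have hxm (i : Fin d) : x i ∈ maximalIdeal S :=
    hx ▸ Ideal.le_radical (Ideal.subset_span ⟨i, rfl⟩)
  obtain ⟨N, hN⟩ := Ideal.exists_radical_pow_le_of_fg (Ideal.span (Set.range x)) (hx.symm ▸ hm)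
  obtain ⟨g, hg⟩ := exists_residue_comp_eq_id S
  have : CharZero (ResidueField S) := algebraRat.charZero _
  let _ : Algebra (ResidueField S) S := g.toAlgebra
  obtain ⟨φ, hφ⟩ := exists_algHom_mvPowerSeries_X (K := ResidueField S) (maximalIdeal S) hxm
  let A := MvPowerSeries (Fin d) (ResidueField S)
  let _ : Algebra A S := φ.toRingHom.toAlgebra
  have hX : algebraMap A S ∘ MvPowerSeries.X = x := funext hφ
  have hmap : (maximalIdeal A).map (algebraMap A S) = Ideal.span (Set.range x) := by
    rw [maximalIdeal_mvPowerSeries, Ideal.map_span, ← Set.range_comp, hX]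
  have : Module.Finite A S := by
    refine finite_of_pow_le_map (I := maximalIdeal A) hm (fun a => ?_) ?_ (N := N) ?_
    · obtain ⟨a, rfl⟩ := Ideal.Quotient.mk_surjective a
      refine ⟨MvPowerSeries.C (residue S a), ?_⟩
      exact (congr_arg (residue S) (φ.commutes _)).trans (RingHom.congr_fun hg _)
    · rw [hmap, ← hx]
      exact Ideal.le_radical
    · rwa [hmap, ← hx]
  have : IsDomain A := NoZeroDivisors.to_isDomain _
  rw [← hX]
  exact hasMaxQuasilength_algebraMap_X
    (algebraMap_injective_of_le_ringKrullDim (ringKrullDim_mvPowerSeries _ d).le hd)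

end Complete

section Main

open IsLocalRing

theorem hasMaxQuasilength_of_algebraRat {R : Type u} [CommRing R] [IsNoetherianRing R]
    [IsLocalRing R] [Algebra ℚ R] {d : ℕ} (hd : (d : WithBot ℕ∞) ≤ ringKrullDim R) {x : Fin d → R}
    (hx : (Ideal.span (Set.range x)).radical = maximalIdeal R) : HasMaxQuasilength x := by
  let S := AdicCompletion (maximalIdeal R) R
  have hS : maximalIdeal S = (maximalIdeal R).map (algebraMap R S) :=
    AdicCompletion.maximalIdeal_eq_map
  let _ : Algebra ℚ S := ((algebraMap R S).comp (algebraMap ℚ R)).toAlgebra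
  refine .of_map (algebraMap R S) (hasMaxQuasilength_of_isAdicComplete (S := S) ?_
    (hd.trans ringKrullDim_le_of_hasGoingDown) ?_)
  · exact hS ▸ (Ideal.fg_of_isNoetherianRing (maximalIdeal R)).map _
  · rw [Set.range_comp, ← Ideal.map_span, ← radical_map_radical, hx, ← hS]
    exact (maximalIdeal.isMaximal S).isPrime.isRadical.radical

theorem hasMaxQuasilength_of_field {R : Type u} [CommRing R] [IsNoetherianRing R] [IsLocalRing R]
    (hfield : ∃ K : Subring R, IsField K) {d : ℕ} (hd : (d : WithBot ℕ∞) ≤ ringKrullDim R)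
    {x : Fin d → R} (hx : (Ideal.span (Set.range x)).radical = maximalIdeal R) :
    HasMaxQuasilength x := by
  obtain ⟨K, hK⟩ := hfield
  let _ : Field K := hK.toField
  obtain ⟨p, _⟩ := CharP.exists K
  rcases CharP.char_is_prime_or_zero K p with hp | rfl
  · have : Fact p.Prime := ⟨hp⟩
    have : CharP R p := charP_of_injective_ringHom (f := K.subtype) Subtype.val_injective p
    exact hasMaxQuasilength_of_charP p hd hx
  · have : CharZero K := CharP.charP_to_charZero K
    let _ : Algebra ℚ R := (K.subtype.comp (algebraMap ℚ K)).toAlgebra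
    exact hasMaxQuasilength_of_algebraRat hd hx

end Main

/-- If `R` is a Noetherian local ring of Krull dimension `d`
containing a field and `x₁, …, x_d` is a system of parameters of `R`, then
`𝔥^d_x(R^n) = n` for every `n ≥ 1`. -/
theorem content_pi_eq_of_sop
    {R : Type u} [CommRing R] [IsNoetherianRing R] [IsLocalRing R]
    (hfield : ∃ K : Subring R, IsField K)
    {d : ℕ} (hd : ringKrullDim R = d)
    (x : Fin d → R) (hx : ∀ i, x i ∈ IsLocalRing.maximalIdeal R)
    (hxparam : (Ideal.span (Set.range x)).radical = IsLocalRing.maximalIdeal R)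
    (n : ℕ) (hn : 1 ≤ n) :
    content x (Fin n → R) = n := by
  exact (hasMaxQuasilength_of_field hfield hd.ge hxparam).content_pi_eq n
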